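/- For every d in the set {681, 1329, 1761, 2913, 3769, 5281, 6217, 7057, 7321}, there are no rational numbers x, y with d·y² = f₁₈(x). -/

import Mathlib

/-!
Write `F`, `Z` and `P` for the homogenised `f₁₈` and the forms `x² + x w + w²` and
`x³ + 3 x² w - w³`. The identity `P² + 3 F = 4 Z³` makes `ρ = (P + y √(-3 d)) / 2` on the twist
`d y² = F` an element of norm `Z³` of an imaginary quadratic order, so its ideal is a cube.
Instead of using class groups, one takes by reduction theory a short element `γ` of the ideal above
`Z`: then `m³ ρ = μ γ³` with `m` bounded and `μ` of norm `m³`, which leaves finitely many pairs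
`(m, μ)`. (If `3 ∣ d`, a factor `3` is removed first.) Almost all of them are excluded because
they force `2 ∣ y` or `3 ∣ y`, and for six of the nine values of `d` this is all of them. What
remains is treated modulo auxiliary primes, where `ρ / μ` is a cube.

For `d = 1329` the prime `23` suffices. For `d = 2913 = 3 · 971` the primes `3` and `11` leave
points for which quadratic reciprocity fixes the characters modulo `971` of the lines `m x - n w`
with `F(n, m) = 33`, contradicting the roots of `F` modulo `971`. For `d = 3769` there are two
further sources of conditions: the descent in the real order attached to `P'² - 9 F = -8 Z³`, and
the identity `F = C² + 8 B²`, which determines `C + 2 B √-2` up to a square and so the quadratic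
symbols modulo `89` of a few linear forms.
-/

namespace TwistedX118

open QuadraticAlgebra

/-! ### Cubic descent in quadratic orders -/

open UpperHalfPlane in
theorem exists_isCoprime_three_mul_sq_le_discr {a b c : ℝ} (ha : 0 < a)
    (hdisc : 0 < 4 * a * c - b ^ 2) :
    ∃ i j : ℤ, IsCoprime i j ∧
      3 * (a * i ^ 2 + b * i * j + c * j ^ 2) ^ 2 ≤ 4 * a * c - b ^ 2 := by
  let τ : ℍ := ⟨⟨b / (2 * a), √(4 * a * c - b ^ 2) / (2 * a)⟩, by positivity⟩
  have hre : τ.re = b / (2 * a) := rfl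
  have him : τ.im ^ 2 = (4 * a * c - b ^ 2) / (2 * a) ^ 2 := by
    rw [← Real.sq_sqrt hdisc.le, ← div_pow]; rfl
  obtain ⟨g, hg⟩ := ModularGroup.exists_smul_mem_fd τ
  refine ⟨g 1 1, g 1 0, (ModularGroup.bottom_row_coprime g).symm, ?_⟩
  have hdenom : Complex.normSq (denom g τ) =
      (g 1 0 * τ.re + g 1 1) ^ 2 + (g 1 0 : ℝ) ^ 2 * τ.im ^ 2 := by
    rw [ModularGroup.denom_apply, Complex.normSq_apply]
    simp only [Complex.add_re, Complex.mul_re, Complex.intCast_re, coe_re, Complex.intCast_im,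
      coe_im, zero_mul, sub_zero, Complex.add_im, Complex.mul_im, add_zero]
    ring
  have hpos : 0 < Complex.normSq (denom g τ) := normSq_denom_pos _ τ.im_ne_zero
  have hfd := ModularGroup.three_le_four_mul_im_sq_of_mem_fd hg
  rw [ModularGroup.im_smul_eq_div_normSq, div_pow, ← mul_div_assoc, le_div_iff₀ (by positivity),
    him, hdenom, hre, him] at hfd
  field_simp at hfd
  exact le_of_mul_le_mul_left (by linarith) (by positivity : 0 < 16 * a ^ 2)

/-- The quadratic algebra `R[ω]` with `ω² = k + ω`, of discriminant `1 + 4 * k`; over `ℤ` these are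
the quadratic orders of odd discriminant. -/
abbrev QuadOrder {R : Type*} [CommRing R] (k : R) := QuadraticAlgebra R k 1

/-- `ρ` is the cube of `γ / m` up to the multiplier `μ`. For `ρ` of norm `c * z ^ 3` this is a
replacement for a cube root of the ideal `(ρ)`, with `m` measuring the failure of `γ` to generate
the ideal above `z`. -/
structure IsCubeDescent {k : ℤ} (c z m : ℤ) (ρ μ γ : QuadOrder k) : Prop where
  norm_gamma : γ.norm = z * m
  norm_mu : μ.norm = c * m ^ 3
  cube_eq : (m : QuadOrder k) ^ 3 * ρ = μ * γ ^ 3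

section CubeDescent
variable {k : ℤ}

theorem intCast_mul_left_cancel {n : ℤ} (hn : n ≠ 0) {α β : QuadOrder k}
    (h : (n : QuadOrder k) * α = n * β) : α = β := by
  rw [← zsmul_eq_mul, ← zsmul_eq_mul] at h
  exact smul_right_injective _ hn h

variable {c z m : ℤ} {ρ μ γ : QuadOrder k}

theorem intCast_norm_eq_mul_star (α : QuadOrder k) : (α.norm : QuadOrder k) = α * star α := by
  simpa using α.algebraMap_norm_eq_mul_star

theorem intCast_im_mul_star_eq {e : ℤ} (he : (ρ * star γ).im = z * e) :
    (ρ.im : QuadOrder k) * star γ = z * e + γ.im * star ρ := by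
  rw [← Int.cast_mul, ← he]
  ext
  · simp only [re_mul, re_intCast, Int.cast_eq, re_star, im_intCast, im_star, im_mul, re_add]
    ring
  · simp only [im_mul, re_intCast, Int.cast_eq, im_star, im_intCast, re_star, im_add]
    ring

theorem dvd_norm_of_dvd_im_mul_star (hcop : IsCoprime z ρ.im) (hρ : z ∣ ρ.norm)
    (hγ : z ∣ (ρ * star γ).im) : z ∣ γ.norm := by
  obtain ⟨e, he⟩ := hγ
  obtain ⟨n, hn⟩ := hρ
  refine (hcop.pow_right (n := 2)).dvd_of_dvd_mul_left
    ⟨z * e ^ 2 + e * γ.im * ρ.trace + γ.im ^ 2 * n, ?_⟩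
  rw [im_mul, re_star, im_star] at he
  rw [norm_def] at hn ⊢
  rw [trace_def]
  linear_combination (ρ.im * γ.re + z * e + ρ.re * γ.im + γ.im * ρ.im) * he + γ.im ^ 2 * hn

theorem pow_three_dvd_mul_star_pow_three (hcop : IsCoprime z ρ.im) (hρ : ρ.norm = c * z ^ 3)
    (hγ : z ∣ (ρ * star γ).im) : (z : QuadOrder k) ^ 3 ∣ ρ * star γ ^ 3 := by
  obtain ⟨e, he⟩ := hγ
  have hρρ : ρ * star ρ = c * z ^ 3 := by
    rw [← intCast_norm_eq_mul_star, hρ]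
    push_cast
    rfl
  refine ((hcop.intCast (R := QuadOrder k)).pow (m := 3) (n := 3)).dvd_of_dvd_mul_left
    ⟨ρ * e ^ 3 + c * (3 * z ^ 2 * e ^ 2 * γ.im + 3 * z * e * γ.im ^ 2 * star ρ +
      γ.im ^ 3 * star ρ ^ 2), ?_⟩
  calc (ρ.im : QuadOrder k) ^ 3 * (ρ * star γ ^ 3)
      = ρ * (ρ.im * star γ) ^ 3 := by ring
    _ = z ^ 3 * (ρ * e ^ 3) + ρ * star ρ * (3 * z ^ 2 * e ^ 2 * γ.im +
        3 * z * e * γ.im ^ 2 * star ρ + γ.im ^ 3 * star ρ ^ 2) := by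
      rw [intCast_im_mul_star_eq he]
      ring
    _ = _ := by
      rw [hρρ]
      ring

theorem exists_isCubeDescent (hz : z ≠ 0) (hcop : IsCoprime z ρ.im) (hρ : ρ.norm = c * z ^ 3)
    (hγ : z ∣ (ρ * star γ).im) : ∃ (m : ℤ) (μ : QuadOrder k), IsCubeDescent c z m ρ μ γ := by
  obtain ⟨m, hm⟩ := dvd_norm_of_dvd_im_mul_star hcop
    (hρ ▸ dvd_mul_of_dvd_right (dvd_pow_self z three_ne_zero) c) hγ
  obtain ⟨μ, hμ⟩ := pow_three_dvd_mul_star_pow_three hcop hρ hγ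
  have hz3 : z ^ 3 ≠ 0 := pow_ne_zero 3 hz
  refine ⟨m, μ, hm, ?_, intCast_mul_left_cancel hz3 ?_⟩
  · refine mul_left_cancel₀ (pow_ne_zero 2 hz3) ?_
    have h := congrArg QuadraticAlgebra.norm hμ
    simp only [map_mul, map_pow, QuadraticAlgebra.norm_intCast, QuadraticAlgebra.norm_star, hρ,
      hm] at h
    linear_combination -h
  · have hγγ : γ * star γ = z * m := by
      rw [← intCast_norm_eq_mul_star, hm]
      push_cast
      rfl
    calc ((z ^ 3 : ℤ) : QuadOrder k) * (m ^ 3 * ρ) = (z * m) ^ 3 * ρ := by push_cast; ring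
      _ = ρ * star γ ^ 3 * γ ^ 3 := by rw [← hγγ]; ring
      _ = ((z ^ 3 : ℤ) : QuadOrder k) * (μ * γ ^ 3) := by rw [hμ]; push_cast; ring

theorem four_mul_norm {R : Type*} [CommRing R] {k : R} (α : QuadOrder k) :
    4 * α.norm = α.trace ^ 2 - (1 + 4 * k) * α.im ^ 2 := by
  rw [QuadraticAlgebra.norm_def, QuadraticAlgebra.trace_def]
  ring

theorem exists_forall_dvd_im_mul_star (hcop : IsCoprime z ρ.im) :
    ∃ b : ℤ, ∀ i j : ℤ, z ∣ (ρ * star (⟨i * z + j * b, j⟩ : QuadOrder k)).im := by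
  obtain ⟨s, t, hst⟩ := hcop
  refine ⟨t * ρ.re, fun i j ↦ ⟨ρ.im * i - j * s * ρ.re, ?_⟩⟩
  simp only [QuadraticAlgebra.im_mul, QuadraticAlgebra.re_star, QuadraticAlgebra.im_star]
  linear_combination (ρ.re * j) * hst

theorem mk_add_mul_ne_zero_of_isCoprime (hz : z ≠ 0) (b : ℤ) {i j : ℤ} (hij : IsCoprime i j) :
    (⟨i * z + j * b, j⟩ : QuadOrder k) ≠ 0 := by
  intro h
  have hj : j = 0 := congrArg QuadraticAlgebra.im h
  have hi : i * z + j * b = 0 := congrArg QuadraticAlgebra.re h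
  have hi' : i = 0 := by simpa [hj, hz] using hi
  exact not_isCoprime_zero_zero (hi' ▸ hj ▸ hij)

theorem norm_pos_of_discr_neg (hk : 1 + 4 * k < 0) (hγ : γ ≠ 0) : 0 < γ.norm := by
  have h4 := four_mul_norm γ
  by_cases him : γ.im = 0
  · have hre : γ.re ≠ 0 := fun hre ↦ hγ (QuadraticAlgebra.ext hre him)
    rw [QuadraticAlgebra.norm_def, him]
    simpa using hre
  · have := sq_pos_of_ne_zero him
    nlinarith [sq_nonneg γ.trace]

theorem norm_ne_zero_of_not_isSquare_discr (hk : ¬ IsSquare (1 + 4 * k)) (hγ : γ ≠ 0) :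
    γ.norm ≠ 0 := by
  intro h0
  have h4 := four_mul_norm γ
  have hdvd : γ.im ^ 2 ∣ γ.trace ^ 2 := ⟨1 + 4 * k, by linarith⟩
  obtain ⟨t, ht⟩ := (Int.pow_dvd_pow_iff two_ne_zero).mp hdvd
  have him : γ.im ≠ 0 := by
    intro him
    refine hγ (QuadraticAlgebra.ext ?_ him)
    rw [QuadraticAlgebra.norm_def, him] at h0
    simpa using h0
  refine hk ⟨t, mul_left_cancel₀ (pow_ne_zero 2 him) ?_⟩
  rw [h0, ht] at h4
  linarith

theorem exists_isCubeDescent_of_discr_neg (hk : 1 + 4 * k < 0) (hz : 0 < z)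
    (hcop : IsCoprime z ρ.im) (hρ : ρ.norm = c * z ^ 3) :
    ∃ m μ γ, IsCubeDescent c z m ρ μ γ ∧ 0 < m ∧ 3 * m ^ 2 ≤ -(1 + 4 * k) := by
  obtain ⟨b, hb⟩ := exists_forall_dvd_im_mul_star hcop
  have hdisc : 4 * (z : ℝ) ^ 2 * (b ^ 2 + b - k) - (z * (2 * b + 1)) ^ 2 =
      z ^ 2 * -(1 + 4 * k) := by ring
  have hk' : (0 : ℝ) < -(1 + 4 * k) := by exact_mod_cast neg_pos.mpr hk
  have : (0 : ℝ) < z := by exact_mod_cast hz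
  obtain ⟨i, j, hij, hsmall⟩ := exists_isCoprime_three_mul_sq_le_discr
    (a := (z : ℝ) ^ 2) (b := z * (2 * b + 1)) (c := b ^ 2 + b - k) (by positivity)
    (by rw [hdisc]; positivity)
  obtain ⟨m, μ, h⟩ := exists_isCubeDescent hz.ne' hcop hρ (hb i j)
  have hm : 0 < m := by
    have := norm_pos_of_discr_neg hk (mk_add_mul_ne_zero_of_isCoprime hz.ne' b hij)
    rw [h.norm_gamma] at this
    exact pos_of_mul_pos_right this hz.le
  refine ⟨m, μ, _, h, hm, ?_⟩
  have hvalue : (z : ℝ) ^ 2 * i ^ 2 + z * (2 * b + 1) * i * j + (b ^ 2 + b - k) * j ^ 2 =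
      z * m := by
    have hnorm := h.norm_gamma
    rw [QuadraticAlgebra.norm_def] at hnorm
    rw [← Int.cast_mul, ← hnorm]
    push_cast
    ring
  rw [hvalue, hdisc] at hsmall
  have hle : (3 * m ^ 2 : ℝ) ≤ -(1 + 4 * k) :=
    le_of_mul_le_mul_left (by linarith) (by positivity : (0 : ℝ) < z ^ 2)
  exact_mod_cast hle

end CubeDescent

section EvalHom
variable {k : ℤ} {S : Type*} [CommRing S]

/-- The ring homomorphism `a + b ω ↦ a + b u` attached to a root `u` of `X² - X - k`. -/
def evalHom {u : S} (hu : u * u = k + u) : QuadOrder k →+* S :=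
  (QuadraticAlgebra.lift ⟨u, by simpa using hu⟩ : QuadOrder k →ₐ[ℤ] S).toRingHom

theorem evalHom_apply {u : S} (hu : u * u = k + u) (α : QuadOrder k) :
    evalHom hu α = α.re + α.im * u := by
  simp [evalHom]

theorem map_eq_re_add_im_mul (φ : QuadOrder k →+* S) (α : QuadOrder k) :
    φ α = α.re + α.im * φ ω := by
  have h : α = α.re + α.im * (ω : QuadOrder k) := by ext <;> simp
  calc φ α = φ (α.re + α.im * (ω : QuadOrder k)) := by rw [← h]
    _ = α.re + α.im * φ ω := by simp only [map_add, map_mul, map_intCast]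

theorem map_star_eq_re_add_im_mul (φ : QuadOrder k →+* S) (α : QuadOrder k) :
    φ (star α) = α.re + α.im * (1 - φ ω) := by
  rw [map_eq_re_add_im_mul φ (star α), re_star, im_star]
  push_cast
  ring

theorem map_mul_map_star (φ : QuadOrder k →+* S) (α : QuadOrder k) :
    φ α * φ (star α) = (α.norm : ℤ) := by
  rw [← map_mul, ← intCast_norm_eq_mul_star, map_intCast]

theorem sq_two_mul_map_omega_sub_one (φ : QuadOrder k →+* S) :
    (2 * φ ω - 1) ^ 2 = 1 + 4 * k := by
  have h := map_mul_map_star φ ω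
  rw [map_star_eq_re_add_im_mul] at h
  simp only [omega_re, omega_im, norm_def, Int.cast_zero, Int.cast_one, mul_zero, mul_one,
    zero_add, zero_sub, Int.cast_neg] at h
  linear_combination -4 * h

end EvalHom

section RealDescent
variable {k : ℤ} {c z : ℤ} {ρ : QuadOrder k}

theorem exists_ne_zero_balanced_le (φ : QuadOrder k →+* ℝ) (hk : 0 < 1 + 4 * k) (hz : 0 < z)
    (hcop : IsCoprime z ρ.im) {T : ℝ} (hT : 0 < T) :
    ∃ γ : QuadOrder k, γ ≠ 0 ∧ z ∣ (ρ * star γ).im ∧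
      3 * (T * φ γ ^ 2 + φ (star γ) ^ 2 / T) ^ 2 ≤ 4 * (z : ℝ) ^ 2 * (1 + 4 * k) := by
  obtain ⟨b, hb⟩ := exists_forall_dvd_im_mul_star hcop
  have : (0 : ℝ) < z := by exact_mod_cast hz
  have hk' : (0 : ℝ) < 1 + 4 * k := by exact_mod_cast hk
  set θ : ℝ := b + φ ω with hθ
  set θ' : ℝ := b + (1 - φ ω) with hθ'
  have hdisc : 4 * ((z : ℝ) ^ 2 * (T + 1 / T)) * (T * θ ^ 2 + θ' ^ 2 / T) -
      (2 * z * (T * θ + θ' / T)) ^ 2 = 4 * z ^ 2 * (1 + 4 * k) := by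
    rw [← sq_two_mul_map_omega_sub_one φ, show 2 * φ ω - 1 = θ - θ' by rw [hθ, hθ']; ring]
    field_simp
    ring
  obtain ⟨i, j, hij, hsmall⟩ := exists_isCoprime_three_mul_sq_le_discr
    (a := (z : ℝ) ^ 2 * (T + 1 / T)) (b := 2 * z * (T * θ + θ' / T))
    (c := T * θ ^ 2 + θ' ^ 2 / T) (by positivity) (by rw [hdisc]; positivity)
  refine ⟨⟨i * z + j * b, j⟩, mk_add_mul_ne_zero_of_isCoprime hz.ne' b hij, hb i j, ?_⟩
  rw [hdisc] at hsmall
  convert hsmall using 3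
  rw [map_eq_re_add_im_mul, map_star_eq_re_add_im_mul, hθ, hθ']
  push_cast
  field_simp
  ring

theorem pow_four_le_of_balanced {c z m T R R' G G' M Δ : ℝ} (hz : 0 < z) (hm : m ≠ 0)
    (hT : 0 < T) (hTR : T ^ 3 * |R| = |R'|) (hRR : R * R' = c * z ^ 3) (hGG : G * G' = z * m)
    (hM : m ^ 3 * R = M * G ^ 3)
    (hS : 3 * (T * G ^ 2 + G' ^ 2 / T) ^ 2 ≤ 4 * z ^ 2 * Δ) :
    27 * M ^ 4 ≤ 64 * c ^ 2 * Δ ^ 3 := by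
  set S := T * G ^ 2 + G' ^ 2 / T with hSdef
  have : 0 ≤ S := by positivity
  have hG : G ≠ 0 := left_ne_zero_of_mul (hGG ▸ mul_ne_zero hz.ne' hm)
  have hzM : z ^ 3 * M = R * G' ^ 3 := by
    refine mul_right_cancel₀ (pow_ne_zero 3 hG) ?_
    calc z ^ 3 * M * G ^ 3 = (z * m) ^ 3 * R := by rw [mul_assoc, ← hM]; ring
      _ = R * G' ^ 3 * G ^ 3 := by rw [← hGG]; ring
  have hG' : G' ^ 2 ≤ S * T := by
    have : S * T = T ^ 2 * G ^ 2 + G' ^ 2 := by rw [hSdef]; field_simp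
    rw [this]
    exact le_add_of_nonneg_left (by positivity)
  have hM2 : z ^ 3 * M ^ 2 ≤ |c| * S ^ 3 := by
    refine le_of_mul_le_mul_left ?_ (pow_pos hz 3)
    calc z ^ 3 * (z ^ 3 * M ^ 2) = (z ^ 3 * M) ^ 2 := by ring
      _ = |R| ^ 2 * (G' ^ 2) ^ 3 := by rw [hzM, sq_abs]; ring
      _ ≤ |R| ^ 2 * (S * T) ^ 3 := by gcongr
      _ = |R| * (T ^ 3 * |R|) * S ^ 3 := by ring
      _ = |R * R'| * S ^ 3 := by rw [hTR, abs_mul]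
      _ = z ^ 3 * (|c| * S ^ 3) := by rw [hRR, abs_mul, abs_of_pos (pow_pos hz 3)]; ring
  refine le_of_mul_le_mul_left ?_ (pow_pos hz 6)
  calc z ^ 6 * (27 * M ^ 4) = 27 * (z ^ 3 * M ^ 2) ^ 2 := by ring
    _ ≤ 27 * (|c| * S ^ 3) ^ 2 := by gcongr
    _ = c ^ 2 * (3 * S ^ 2) ^ 3 := by rw [mul_pow, sq_abs]; ring
    _ ≤ c ^ 2 * (4 * z ^ 2 * Δ) ^ 3 := by gcongr
    _ = z ^ 6 * (64 * c ^ 2 * Δ ^ 3) := by ring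

theorem three_mul_sq_le_of_balanced {z m T G G' Δ : ℝ} (hz : 0 < z) (hT : 0 < T)
    (hGG : G * G' = z * m) (hS : 3 * (T * G ^ 2 + G' ^ 2 / T) ^ 2 ≤ 4 * z ^ 2 * Δ) :
    3 * m ^ 2 ≤ Δ := by
  have hsq : (T * G ^ 2 + G' ^ 2 / T) ^ 2 - 4 * (z * m) ^ 2 = (T * G ^ 2 - G' ^ 2 / T) ^ 2 := by
    rw [← hGG]
    field_simp
    ring
  have hpos : 0 < 4 * z ^ 2 := by positivity
  refine le_of_mul_le_mul_left ?_ hpos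
  linarith [sq_nonneg (T * G ^ 2 - G' ^ 2 / T)]

theorem exists_pos_pow_three_mul_abs_eq {a b : ℝ} (ha : a ≠ 0) (hb : b ≠ 0) :
    ∃ T : ℝ, 0 < T ∧ T ^ 3 * |a| = |b| := by
  refine ⟨(|b| / |a|) ^ ((3 : ℕ) : ℝ)⁻¹, by positivity, ?_⟩
  rw [Real.rpow_inv_natCast_pow (by positivity) three_ne_zero,
    div_mul_cancel₀ _ (abs_ne_zero.mpr ha)]

theorem IsCubeDescent.trace_sq_add_sq_le {m : ℤ} {μ γ : QuadOrder k}
    (h : IsCubeDescent c z m ρ μ γ) (φ : QuadOrder k →+* ℝ) (hz : 0 < z) (hm : m ≠ 0)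
    (hρ : ρ.norm = c * z ^ 3) {T : ℝ} (hT : 0 < T) (hTR : T ^ 3 * |φ ρ| = |φ (star ρ)|)
    (hS : 3 * (T * φ γ ^ 2 + φ (star γ) ^ 2 / T) ^ 2 ≤ 4 * (z : ℝ) ^ 2 * (1 + 4 * k)) :
    27 * (μ.trace ^ 2 + (1 + 4 * k) * μ.im ^ 2) ^ 2 ≤ 1024 * c ^ 2 * (1 + 4 * k) ^ 3 := by
  have hz' : (0 : ℝ) < z := by exact_mod_cast hz
  have hm' : (m : ℝ) ≠ 0 := by exact_mod_cast hm
  have hRR : φ ρ * φ (star ρ) = c * z ^ 3 := by rw [map_mul_map_star, hρ]; push_cast; rfl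
  have hGG : φ γ * φ (star γ) = z * m := by
    rw [map_mul_map_star, h.norm_gamma]; push_cast; rfl
  have hM : (m : ℝ) ^ 3 * φ ρ = φ μ * φ γ ^ 3 := by
    simpa only [map_mul, map_pow, map_intCast] using congrArg φ h.cube_eq
  have hM' : (m : ℝ) ^ 3 * φ (star ρ) = φ (star μ) * φ (star γ) ^ 3 := by
    simpa only [star_mul', star_pow, star_intCast, map_mul, map_pow, map_intCast] using
      congrArg (fun α ↦ φ (star α)) h.cube_eq
  have hμ := pow_four_le_of_balanced hz' hm' hT hTR hRR hGG hM hS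
  have hμ' := pow_four_le_of_balanced (R := φ (star ρ)) (R' := φ ρ) hz' hm' (inv_pos.mpr hT)
    (by rw [← hTR]; field_simp) (by rw [mul_comm, hRR]) (by rw [mul_comm, hGG]) hM'
    (by convert hS using 3; field_simp; ring)
  have hsum : (μ.trace : ℝ) ^ 2 + (1 + 4 * k) * μ.im ^ 2 = 2 * (φ μ ^ 2 + φ (star μ) ^ 2) := by
    rw [map_star_eq_re_add_im_mul φ μ, map_eq_re_add_im_mul φ μ, trace_def,
      ← sq_two_mul_map_omega_sub_one φ]
    push_cast
    ring
  have hbound : 27 * ((μ.trace : ℝ) ^ 2 + (1 + 4 * k) * μ.im ^ 2) ^ 2 ≤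
      1024 * c ^ 2 * (1 + 4 * k) ^ 3 := by
    rw [hsum]
    nlinarith [sq_nonneg (φ μ ^ 2 - φ (star μ) ^ 2)]
  exact_mod_cast hbound

theorem exists_isCubeDescent_of_discr_pos (hk : 0 < 1 + 4 * k) (hsq : ¬ IsSquare (1 + 4 * k))
    (hc : c ≠ 0) (hz : 0 < z) (hcop : IsCoprime z ρ.im) (hρ : ρ.norm = c * z ^ 3) :
    ∃ m μ γ, IsCubeDescent c z m ρ μ γ ∧ m ≠ 0 ∧ 3 * m ^ 2 ≤ 1 + 4 * k ∧
      27 * (μ.trace ^ 2 + (1 + 4 * k) * μ.im ^ 2) ^ 2 ≤ 1024 * c ^ 2 * (1 + 4 * k) ^ 3 := by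
  have hk' : (0 : ℝ) ≤ 1 + 4 * k := by exact_mod_cast hk.le
  have hroot : (1 + √(1 + 4 * k)) / 2 * ((1 + √(1 + 4 * k)) / 2) =
      (k : ℝ) + (1 + √(1 + 4 * k)) / 2 := by
    linear_combination Real.sq_sqrt hk' / 4
  set φ : QuadOrder k →+* ℝ := evalHom hroot
  have hz' : (0 : ℝ) < z := by exact_mod_cast hz
  have hRR : φ ρ * φ (star ρ) = c * z ^ 3 := by rw [map_mul_map_star, hρ]; push_cast; rfl
  have hRR0 : φ ρ * φ (star ρ) ≠ 0 := by
    rw [hRR]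
    exact mul_ne_zero (by exact_mod_cast hc) (pow_ne_zero 3 hz'.ne')
  obtain ⟨T, hT, hTR⟩ := exists_pos_pow_three_mul_abs_eq (left_ne_zero_of_mul hRR0)
    (right_ne_zero_of_mul hRR0)
  obtain ⟨γ, hγ0, hγ, hS⟩ := exists_ne_zero_balanced_le φ hk hz hcop hT
  obtain ⟨m, μ, h⟩ := exists_isCubeDescent hz.ne' hcop hρ hγ
  have hm : m ≠ 0 := by
    rintro rfl
    exact norm_ne_zero_of_not_isSquare_discr hsq hγ0 (by simpa using h.norm_gamma)
  have hGG : φ γ * φ (star γ) = z * m := by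
    rw [map_mul_map_star, h.norm_gamma]
    push_cast
    rfl
  exact ⟨m, μ, γ, h, hm, by exact_mod_cast three_mul_sq_le_of_balanced hz' hT hGG hS,
    h.trace_sq_add_sq_le φ hz hm hρ hT hTR hS⟩

end RealDescent

/-! ### Points on the twists -/

section Forms
variable {R : Type*} [CommRing R]

/-- The homogenisation of `f₁₈`. -/
def sextic (x w : R) : R :=
  x ^ 6 + 2 * x ^ 5 * w + 5 * x ^ 4 * w ^ 2 + 10 * x ^ 3 * w ^ 3 + 10 * x ^ 2 * w ^ 4 +
    4 * x * w ^ 5 + w ^ 6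

/-- The norm form of `ℤ[ζ₃]`, which is the `Z` of the identity `P² + 3 F = 4 Z³`. -/
def quadForm (x w : R) : R := x ^ 2 + x * w + w ^ 2

/-- The cubic form `P` in the identity `P² + 3 F = 4 Z³` for `F = sextic`, `Z = quadForm`. -/
def cubicForm (x w : R) : R := x ^ 3 + 3 * x ^ 2 * w - w ^ 3

theorem cubicForm_sq_add_three_mul_sextic (x w : R) :
    cubicForm x w ^ 2 + 3 * sextic x w = 4 * quadForm x w ^ 3 := by
  rw [cubicForm, sextic, quadForm]
  ring

theorem sextic_mul_mul (t x w : R) : sextic (t * x) (t * w) = t ^ 6 * sextic x w := by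
  rw [sextic, sextic]
  ring

theorem cubicForm_mul_mul (t x w : R) : cubicForm (t * x) (t * w) = t ^ 3 * cubicForm x w := by
  rw [cubicForm, cubicForm]
  ring

variable {S : Type*} [CommRing S] (f : R →+* S)

theorem map_sextic (x w : R) : f (sextic x w) = sextic (f x) (f w) := by
  simp only [sextic, map_add, map_mul, map_pow, map_ofNat]

theorem map_quadForm (x w : R) : f (quadForm x w) = quadForm (f x) (f w) := by
  simp only [quadForm, map_add, map_mul, map_pow]

theorem map_cubicForm (x w : R) : f (cubicForm x w) = cubicForm (f x) (f w) := by
  simp only [cubicForm, map_add, map_sub, map_mul, map_pow, map_ofNat]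

end Forms

section Congruences
variable {x w : ℤ}

theorem three_dvd_sub_of_three_dvd_sextic (h : 3 ∣ sextic x w) : 3 ∣ x - w := by
  have key : ∀ x w : ZMod 3, sextic x w = 0 → x - w = 0 := by
    simp only [sextic]
    decide
  have h0 := map_sextic (Int.castRingHom (ZMod 3)) x w
  rw [eq_intCast, (ZMod.intCast_zmod_eq_zero_iff_dvd (sextic x w) 3).mpr h] at h0
  refine (ZMod.intCast_zmod_eq_zero_iff_dvd (x - w) 3).mp ?_
  simpa using key _ _ h0.symm

theorem not_nine_dvd_sextic (h : IsCoprime x w) : ¬ 9 ∣ sextic x w := by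
  have key : ∀ x w : ZMod 9, sextic x w = 0 → 3 * x = 0 ∧ 3 * w = 0 := by
    simp only [sextic]
    decide
  intro h9
  have h0 := map_sextic (Int.castRingHom (ZMod 9)) x w
  rw [eq_intCast, (ZMod.intCast_zmod_eq_zero_iff_dvd (sextic x w) 9).mpr h9] at h0
  obtain ⟨hx, hw⟩ := key _ _ h0.symm
  have three_dvd {n : ℤ} (hn : 3 * Int.castRingHom (ZMod 9) n = 0) : 3 ∣ n := by
    have := (ZMod.intCast_zmod_eq_zero_iff_dvd (3 * n) 9).mp (by simpa using hn)
    omega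
  exact Int.prime_three.not_isUnit (h.isUnit_of_dvd' (three_dvd hx) (three_dvd hw))

end Congruences

/-- `(x : w : y)` is a point in coprime weighted homogeneous coordinates on the twist
`d y² = f₁₈(x)`, with `w = 0` at infinity. -/
structure IsTwistPoint {R : Type*} [CommRing R] (d x w y : R) : Prop where
  isCoprime : IsCoprime x w
  eq_sextic : d * y ^ 2 = sextic x w

namespace IsTwistPoint

section CommRing
variable {R S : Type*} [CommRing R] [CommRing S] {d x w y : R}

theorem map (h : IsTwistPoint d x w y) (f : R →+* S) :
    IsTwistPoint (f d) (f x) (f w) (f y) :=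
  ⟨h.isCoprime.map f, by rw [← map_sextic, ← h.eq_sextic, map_mul, map_pow]⟩

theorem of_sq_eq {y' : R} (h : IsTwistPoint d x w y) (hy : y' ^ 2 = y ^ 2) :
    IsTwistPoint d x w y' :=
  ⟨h.isCoprime, by rw [hy, h.eq_sextic]⟩

-- The order three automorphism `x ↦ -1 / (x + 1)` of the curve.
theorem rotate (h : IsTwistPoint d x w y) : IsTwistPoint d (-w) (x + w) y := by
  obtain ⟨a, b, hab⟩ := h.isCoprime
  refine ⟨⟨a - b, a, by linear_combination hab⟩, ?_⟩
  rw [h.eq_sextic, sextic, sextic]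
  ring

theorem ne_zero_or_ne_zero [Nontrivial R] (h : IsTwistPoint d x w y) : x ≠ 0 ∨ w ≠ 0 := by
  by_contra! h0
  exact not_isCoprime_zero_zero (h0.1 ▸ h0.2 ▸ h.isCoprime)

end CommRing

theorem exists_chart {K : Type*} [Field K] {d x w y : K} (h : IsTwistPoint d x w y) :
    ∃ t : K, t ≠ 0 ∧ (t * w = 1 ∨ t * w = 0 ∧ t * x = 1) ∧
      d * (t ^ 3 * y) ^ 2 = sextic (t * x) (t * w) := by
  have heq (t : K) : d * (t ^ 3 * y) ^ 2 = sextic (t * x) (t * w) := by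
    rw [sextic_mul_mul, ← h.eq_sextic]
    ring
  by_cases hw : w = 0
  · have hx : x ≠ 0 := h.ne_zero_or_ne_zero.resolve_right (not_not.mpr hw)
    exact ⟨x⁻¹, inv_ne_zero hx, .inr ⟨by simp [hw], inv_mul_cancel₀ hx⟩, heq _⟩
  · exact ⟨w⁻¹, inv_ne_zero hw, .inl (inv_mul_cancel₀ hw), heq _⟩

theorem exists_of_rat {d : ℤ} (hd : Squarefree d) {x y : ℚ} (h : (d : ℚ) * y ^ 2 = sextic x 1) :
    ∃ y' : ℤ, IsTwistPoint d x.num x.den y' := by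
  have : (x.den : ℚ) ≠ 0 := by exact_mod_cast x.den_ne_zero
  set r : ℚ := y * x.den ^ 3 with hr
  have hrF : (d : ℚ) * r ^ 2 = (sextic x.num x.den : ℤ) := by
    have hxx : (x.den : ℚ) * x = x.num := by rw [mul_comm, Rat.mul_den_eq_num]
    calc (d : ℚ) * r ^ 2 = x.den ^ 6 * (d * y ^ 2) := by rw [hr]; ring
      _ = sextic (x.den * x) (x.den * 1) := by rw [h, sextic_mul_mul]
      _ = (sextic x.num x.den : ℤ) := by
        rw [hxx, mul_one]
        exact_mod_cast (map_sextic (Int.castRingHom ℚ) x.num x.den).symm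
  have hnum : d * r.num ^ 2 = sextic x.num x.den * (r.den * r.den : ℤ) := by
    have hrr : r * r.den = r.num := Rat.mul_den_eq_num r
    have : (d : ℚ) * r.num ^ 2 = (sextic x.num x.den : ℤ) * (r.den * r.den) := by
      rw [← hrr, ← hrF]
      ring
    exact_mod_cast this
  have hdvd : (r.den : ℤ) ∣ r.num ^ 2 :=
    hd.dvd_of_squarefree_of_mul_dvd_mul_right ⟨_, hnum.trans (mul_comm _ _)⟩
  have hunit : IsUnit (r.den : ℤ) :=
    (r.isCoprime_num_den.symm.pow_right (n := 2)).isUnit_of_dvd' dvd_rfl hdvd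
  have hone : (r.den : ℤ) = 1 := by
    rcases Int.isUnit_iff.mp hunit with h1 | h1 <;> omega
  exact ⟨r.num, x.isCoprime_num_den, by rw [hnum, hone, one_mul, mul_one]⟩

section Int
variable {d x w y : ℤ}

theorem odd (h : IsTwistPoint d x w y) : Odd y ∧ Odd (quadForm x w) ∧ Odd (cubicForm x w) := by
  have key : ∀ d x w y : ZMod 2, x ≠ 0 ∨ w ≠ 0 → d * y ^ 2 = sextic x w →
      y = 1 ∧ quadForm x w = 1 ∧ cubicForm x w = 1 := by
    simp only [sextic, quadForm, cubicForm]
    decide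
  have h2 := h.map (Int.castRingHom (ZMod 2))
  have := key _ _ _ _ h2.ne_zero_or_ne_zero h2.eq_sextic
  rw [← map_quadForm, ← map_cubicForm] at this
  simpa only [eq_intCast, ZMod.intCast_eq_one_iff_odd] using this

theorem quadForm_pos (h : IsTwistPoint d x w y) : 0 < quadForm x w := by
  have hne : quadForm x w ≠ 0 := fun h0 ↦ by simpa [h0] using h.odd.2.1
  have hnonneg : 0 ≤ quadForm x w := by
    rw [quadForm]
    nlinarith [sq_nonneg (x + w), sq_nonneg x, sq_nonneg w]
  exact lt_of_le_of_ne hnonneg hne.symm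

theorem not_three_dvd (h : IsTwistPoint d x w y) : ¬ 3 ∣ y := by
  rintro ⟨v, rfl⟩
  exact not_nine_dvd_sextic h.isCoprime ⟨d * v ^ 2, by rw [← h.eq_sextic]; ring⟩

theorem isCoprime_quadForm (h : IsTwistPoint d x w y) : IsCoprime (quadForm x w) y := by
  refine isCoprime_of_prime_dvd (fun h0 ↦ h.quadForm_pos.ne' h0.1) fun p hp hpz hpy ↦ ?_
  have hprod : p ∣ 3 * (x * w ^ 5) := by
    have hmod : 3 * (x * w ^ 5) =
        quadForm x w * (x ^ 4 + x ^ 3 * w + 3 * x ^ 2 * w ^ 2 + 6 * x * w ^ 3 + w ^ 4) -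
          d * y * y := by
      rw [mul_assoc d, ← sq, h.eq_sextic, sextic, quadForm]
      ring
    rw [hmod]
    exact dvd_sub (dvd_mul_of_dvd_left hpz _) (dvd_mul_of_dvd_right hpy _)
  have hx : ¬ p ∣ x := fun hx ↦ hp.not_isUnit <| h.isCoprime.isUnit_of_dvd' hx <|
    hp.dvd_of_dvd_pow (n := 2) <| by
      rw [show w ^ 2 = quadForm x w - x * (x + w) by rw [quadForm]; ring]
      exact dvd_sub hpz (dvd_mul_of_dvd_left hx _)
  have hw : ¬ p ∣ w := fun hw ↦ hx <| hp.dvd_of_dvd_pow (n := 2) <| by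
    rw [show x ^ 2 = quadForm x w - w * (x + w) by rw [quadForm]; ring]
    exact dvd_sub hpz (dvd_mul_of_dvd_left hw _)
  rcases hp.dvd_or_dvd hprod with h3 | h3
  · exact h.not_three_dvd ((hp.associated_of_dvd Int.prime_three h3).symm.dvd.trans hpy)
  · exact (hp.dvd_or_dvd h3).elim hx fun h5 ↦ hw (hp.dvd_of_dvd_pow h5)

end Int
end IsTwistPoint

section Normalize
variable {k c z m : ℤ} {ρ μ γ : QuadOrder k}

namespace IsCubeDescent

theorem neg (h : IsCubeDescent c z m ρ μ γ) : IsCubeDescent c z m ρ (-μ) (-γ) where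
  norm_gamma := by rw [QuadraticAlgebra.norm_neg, h.norm_gamma]
  norm_mu := by rw [QuadraticAlgebra.norm_neg, h.norm_mu]
  cube_eq := by rw [h.cube_eq]; ring

theorem star (h : IsCubeDescent c z m ρ μ γ) :
    IsCubeDescent c z m (star ρ) (star μ) (star γ) where
  norm_gamma := by rw [QuadraticAlgebra.norm_star, h.norm_gamma]
  norm_mu := by rw [QuadraticAlgebra.norm_star, h.norm_mu]
  cube_eq := by simpa using congrArg Star.star h.cube_eq

theorem trace_sq_eq (h : IsCubeDescent c z m ρ μ γ) :
    μ.trace ^ 2 = 4 * c * m ^ 3 + (1 + 4 * k) * μ.im ^ 2 := by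
  linear_combination 4 * h.norm_mu - four_mul_norm μ

theorem exists_nonneg (h : IsCubeDescent c z m ρ μ γ) :
    ∃ ρ' μ' γ' : QuadOrder k, IsCubeDescent c z m ρ' μ' γ' ∧ ρ'.trace = ρ.trace ∧
      ρ'.im ^ 2 = ρ.im ^ 2 ∧ 0 ≤ μ'.trace ∧ 0 ≤ μ'.im := by
  wlog htrace : 0 ≤ μ.trace generalizing μ γ
  · refine this h.neg ?_
    rw [map_neg]
    exact neg_nonneg.mpr (not_le.mp htrace).le
  by_cases him : 0 ≤ μ.im
  · exact ⟨ρ, μ, γ, h, rfl, rfl, htrace, him⟩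
  · exact ⟨_, _, _, h.star, trace_star ρ, by simp, (trace_star μ).symm ▸ htrace,
      by simpa using (not_le.mp him).le⟩

end IsCubeDescent

/-- A cube descent in an imaginary quadratic order with `m` below the Minkowski bound and with
`μ` in the first quadrant of the `(trace, im)`-plane. -/
structure IsReducedDescent {k : ℤ} (c z m : ℤ) (ρ μ γ : QuadOrder k) : Prop extends
    IsCubeDescent c z m ρ μ γ where
  pos : 0 < m
  three_mul_sq_le : 3 * m ^ 2 ≤ -(1 + 4 * k)
  trace_nonneg : 0 ≤ μ.trace
  im_nonneg : 0 ≤ μ.im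

theorem exists_trace_eq_im_eq {P y : ℤ} (h : 4 ∣ P ^ 2 - (1 + 4 * k) * y ^ 2) :
    ∃ ρ : QuadOrder k, ρ.trace = P ∧ ρ.im = y := by
  have heven : Even (P - y) := by
    have h2 : Even (P ^ 2 - (1 + 4 * k) * y ^ 2) := even_iff_two_dvd.mpr (dvd_trans (by norm_num) h)
    have hk : ¬ Even (1 + 4 * k) := by
      rw [Int.not_even_iff_odd]
      exact ⟨2 * k, by ring⟩
    simpa [Int.even_sub, Int.even_mul, Int.even_pow, hk] using h2
  obtain ⟨a, ha⟩ := heven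
  exact ⟨⟨a, y⟩, by simp only [trace_def]; linarith, rfl⟩

theorem exists_isReducedDescent {P y : ℤ} (hk : 1 + 4 * k < 0) (hz : 0 < z) (hcop : IsCoprime z y)
    (h : P ^ 2 - (1 + 4 * k) * y ^ 2 = 4 * (c * z ^ 3)) :
    ∃ m ρ μ γ, IsReducedDescent (k := k) c z m ρ μ γ ∧ ρ.trace = P ∧ ρ.im ^ 2 = y ^ 2 := by
  obtain ⟨ρ, hP, rfl⟩ := exists_trace_eq_im_eq (k := k) ⟨_, h⟩
  have hρ : ρ.norm = c * z ^ 3 := by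
    have := four_mul_norm ρ
    rw [hP, h] at this
    linarith
  obtain ⟨m, μ, γ, hdesc, hm, hle⟩ := exists_isCubeDescent_of_discr_neg hk hz hcop hρ
  obtain ⟨ρ', μ', γ', hdesc', htrace, him, h0, h1⟩ := hdesc.exists_nonneg
  exact ⟨m, ρ', μ', γ', ⟨hdesc', hm, hle, h0, h1⟩, htrace.trans hP, him⟩

/-- The triples `(m, t, q)` with `0 < m < M`, `q < Q` and `t² + D q² = 4 C m³`, that is the
candidates for `(m, μ.trace, μ.im)` in a reduced descent. -/
def normSolutions (C D M Q : ℕ) : Finset (ℕ × ℕ × ℕ) :=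
  {s ∈ Finset.Ioo 0 M ×ˢ Finset.range Q |
    Nat.sqrt (4 * C * s.1 ^ 3 - D * s.2 ^ 2) ^ 2 + D * s.2 ^ 2 = 4 * C * s.1 ^ 3}.image
      fun s ↦ (s.1, Nat.sqrt (4 * C * s.1 ^ 3 - D * s.2 ^ 2), s.2)

theorem mem_normSolutions {C D M Q m t q : ℕ} (hm : 0 < m) (hM : m < M) (hQ : q < Q)
    (h : t ^ 2 + D * q ^ 2 = 4 * C * m ^ 3) : (m, t, q) ∈ normSolutions C D M Q := by
  have hsub : Nat.sqrt (4 * C * m ^ 3 - D * q ^ 2) = t := by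
    rw [← h, Nat.add_sub_cancel, Nat.sqrt_eq']
  refine Finset.mem_image.mpr ⟨(m, q), Finset.mem_filter.mpr ⟨?_, ?_⟩, ?_⟩
  · exact Finset.mem_product.mpr ⟨Finset.mem_Ioo.mpr ⟨hm, hM⟩, Finset.mem_range.mpr hQ⟩
  · rw [hsub, h]
  · rw [hsub]

theorem IsReducedDescent.mem_normSolutions {C D M Q : ℕ} (h : IsReducedDescent C z m ρ μ γ)
    (hk : 1 + 4 * k = -D) (hM : D < 3 * M ^ 2) (hQ : 4 * C * M ^ 3 < D * Q ^ 2) :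
    (m.toNat, μ.trace.toNat, μ.im.toNat) ∈ normSolutions C D M Q := by
  obtain ⟨n, rfl⟩ := Int.eq_ofNat_of_zero_le h.pos.le
  obtain ⟨t, ht⟩ := Int.eq_ofNat_of_zero_le h.trace_nonneg
  obtain ⟨q, hq⟩ := Int.eq_ofNat_of_zero_le h.im_nonneg
  have hnorm : t ^ 2 + D * q ^ 2 = 4 * C * n ^ 3 := by
    have := h.trace_sq_eq
    rw [ht, hq, hk] at this
    zify
    linarith
  have hn : n < M := by
    have := h.three_mul_sq_le
    rw [hk, neg_neg] at this
    refine lt_of_pow_lt_pow_left₀ 2 M.zero_le ?_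
    zify at hM ⊢
    linarith
  have hqQ : q < Q := by
    by_contra! hle
    have h1 : D * Q ^ 2 ≤ D * q ^ 2 := by gcongr
    have h2 : 4 * C * n ^ 3 ≤ 4 * C * M ^ 3 := by gcongr
    omega
  rw [ht, hq]
  exact TwistedX118.mem_normSolutions (by exact_mod_cast h.pos) hn hqQ hnorm

end Normalize

section Obstruction
variable {k c z m : ℤ} {ρ μ γ : QuadOrder k}

theorem im_pow_three {R : Type*} [CommRing R] {k : R} (α : QuadOrder k) :
    (α ^ 3).im = 3 * (α.re * α.im * (α.re + α.im)) + (k + 1) * α.im ^ 3 := by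
  rw [pow_three, im_mul, re_mul, im_mul]
  ring

theorem dvd_im_of_dvd_im {p : ℤ} (hp : Prime p) (hm : ¬ p ∣ m) (hμ : p ∣ μ.im)
    (hγ : p ∣ (γ ^ 3).im) (h : (m : QuadOrder k) ^ 3 * ρ = μ * γ ^ 3) : p ∣ ρ.im := by
  have him : m ^ 3 * ρ.im = μ.re * (γ ^ 3).im + μ.im * ((γ ^ 3).re + (γ ^ 3).im) := by
    have := congrArg QuadraticAlgebra.im h
    rw [← Int.cast_pow, ← zsmul_eq_mul, im_smul, im_mul] at this
    rw [← smul_eq_mul, this]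
    ring
  have hdvd : p ∣ m ^ 3 * ρ.im :=
    him ▸ dvd_add (dvd_mul_of_dvd_right hγ _) (dvd_mul_of_dvd_left hμ _)
  exact (hp.dvd_or_dvd hdvd).resolve_left fun h3 ↦ hm (hp.dvd_of_dvd_pow h3)

theorem two_dvd_im_pow_three (hk : Odd k) (γ : QuadOrder k) : 2 ∣ (γ ^ 3).im := by
  have hk' : Even (k + 1) := hk.add_one
  simp only [im_pow_three, ← even_iff_two_dvd, Int.even_add, Int.even_mul, hk', true_or, iff_true]
  tauto

theorem three_dvd_im_pow_three (hk : 3 ∣ k + 1) (γ : QuadOrder k) : 3 ∣ (γ ^ 3).im := by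
  rw [im_pow_three]
  exact dvd_add (dvd_mul_right 3 _) (dvd_mul_of_dvd_left hk _)

theorem exists_two_mul_of_even_norm (hk : Odd k) (h : Even γ.norm) :
    ∃ γ' : QuadOrder k, γ = 2 * γ' := by
  have hk' : ¬ Even k := Int.not_even_iff_odd.mpr hk
  have heven : Even γ.re ∧ Even γ.im := by
    simp only [norm_def, Int.even_sub, Int.even_add, Int.even_mul] at h
    have : ¬ Even (1 : ℤ) := by decide
    tauto
  obtain ⟨⟨a, ha⟩, b, hb⟩ := heven
  refine ⟨⟨a, b⟩, QuadraticAlgebra.ext ?_ ?_⟩ <;> simp [two_mul, ha, hb]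

theorem even_im_of_im_eq_zero_of_mod_eight (hk : Odd k)
    (h : IsCubeDescent c z m ρ μ γ) (hμ : μ.im = 0) (hm : m % 8 = 4) : 2 ∣ ρ.im := by
  obtain ⟨m', rfl, hm'⟩ : ∃ m', m = 4 * m' ∧ ¬ 2 ∣ m' := ⟨m / 4, by omega, by omega⟩
  obtain ⟨γ', rfl⟩ : ∃ γ' : QuadOrder k, γ = 2 * γ' := by
    refine exists_two_mul_of_even_norm hk ?_
    rw [h.norm_gamma]
    exact ⟨z * (2 * m'), by ring⟩
  obtain ⟨r, hr⟩ : 8 ∣ μ.re := by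
    have hsq : μ.re ^ 2 = 8 ^ 2 * (c * m' ^ 3) := by
      have := h.norm_mu
      rw [norm_def, hμ] at this
      linear_combination this
    exact (Int.pow_dvd_pow_iff two_ne_zero).mp ⟨_, hsq⟩
  have hμ' : μ = 8 * (r : QuadOrder k) := by
    refine QuadraticAlgebra.ext ?_ ?_ <;> simp [hr, hμ]
  refine dvd_im_of_dvd_im (μ := (r : QuadOrder k)) Int.prime_two hm' (by simp)
    (two_dvd_im_pow_three hk γ') ?_
  refine intCast_mul_left_cancel (n := 64) (by norm_num) ?_
  have := h.cube_eq
  rw [hμ'] at this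
  push_cast at this ⊢
  linear_combination this

/-- The conditions at `2` and `3` on `m` and `q = μ.im` that force `ρ.im` to be divisible by
`2` or `3` in a cube descent with multiplier `c = δ`. -/
def IsObstructed (δ m q : ℕ) : Prop :=
  (Odd m ∧ Even q) ∨ (q = 0 ∧ m % 8 = 4) ∨ (¬ 3 ∣ δ ∧ 3 ∣ q ∧ ¬ 3 ∣ m)

instance (δ m q : ℕ) : Decidable (IsObstructed δ m q) :=
  inferInstanceAs (Decidable (_ ∨ _ ∨ _))

theorem two_dvd_or_three_dvd_of_isObstructed {δ : ℕ} (hk : Odd k) (hk3 : ¬ 3 ∣ δ → 3 ∣ k + 1)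
    (h : IsReducedDescent δ z m ρ μ γ)
    (hobs : IsObstructed δ m.toNat μ.im.toNat) : 2 ∣ ρ.im ∨ 3 ∣ ρ.im := by
  have hm := h.pos
  have hq := h.im_nonneg
  rcases hobs with ⟨hm2, hq2⟩ | ⟨hq0, hm8⟩ | ⟨hδ3, hq3, hm3⟩
  · refine .inl (dvd_im_of_dvd_im Int.prime_two ?_ ?_ (two_dvd_im_pow_three hk γ) h.cube_eq)
    · rw [Nat.odd_iff] at hm2
      omega
    · rw [Nat.even_iff] at hq2
      omega
  · exact .inl (even_im_of_im_eq_zero_of_mod_eight hk h.toIsCubeDescent (by omega) (by omega))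
  · exact .inr (dvd_im_of_dvd_im Int.prime_three (by omega) (by omega)
      (three_dvd_im_pow_three (hk3 hδ3) γ) h.cube_eq)

end Obstruction

/-! ### Obstructed descents -/

section ImaginaryDescent

theorem IsTwistPoint.exists_quadForm_eq_cubicForm_eq {d x w y δ : ℤ} (h : IsTwistPoint d x w y)
    (hδ : δ = 1 ∨ δ = 3 ∧ 3 ∣ d) :
    ∃ z P, quadForm x w = δ * z ∧ cubicForm x w = δ * P := by
  rcases hδ with rfl | ⟨rfl, h3⟩
  · exact ⟨_, _, (one_mul _).symm, (one_mul _).symm⟩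
  · obtain ⟨u, hu⟩ : 3 ∣ x - w :=
      three_dvd_sub_of_three_dvd_sextic (h.eq_sextic ▸ dvd_mul_of_dvd_left h3 _)
    obtain rfl : x = w + 3 * u := by linarith
    refine ⟨w ^ 2 + 3 * w * u + 3 * u ^ 2, w ^ 3 + 9 * w ^ 2 * u + 18 * w * u ^ 2 + 9 * u ^ 3,
      ?_, ?_⟩
    · rw [quadForm]
      ring
    · rw [cubicForm]
      ring

theorem IsTwistPoint.exists_cube_eq {d k x w y : ℤ} {δ D M Q : ℕ} {E : Finset (ℕ × ℕ × ℕ)}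
    (h : IsTwistPoint d x w y) (hδ : δ = 1 ∨ δ = 3 ∧ 3 ∣ d)
    (hD : (δ ^ 2 * D : ℤ) = 3 * d) (hk : 1 + 4 * k = -D) (hodd : Odd k)
    (hM : D < 3 * M ^ 2) (hQ : 4 * δ * M ^ 3 < D * Q ^ 2)
    (hE : ∀ s ∈ normSolutions δ D M Q, IsObstructed δ s.1 s.2.2 ∨ s ∈ E) :
    ∃ (m : ℤ) (ρ μ γ : QuadOrder k), IsTwistPoint d x w ρ.im ∧ δ * ρ.trace = cubicForm x w ∧
      (m : QuadOrder k) ^ 3 * ρ = μ * γ ^ 3 ∧ (m.toNat, μ.trace.toNat, μ.im.toNat) ∈ E := by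
  have hδ0 : (δ : ℤ) ≠ 0 := by rcases hδ with rfl | ⟨rfl, -⟩ <;> norm_num
  obtain ⟨z, P, hz, hP⟩ := h.exists_quadForm_eq_cubicForm_eq (δ := δ) (by exact_mod_cast hδ)
  have hzpos : 0 < z := pos_of_mul_pos_right (hz ▸ h.quadForm_pos) δ.cast_nonneg
  have hcop : IsCoprime z y := (hz ▸ h.isCoprime_quadForm).of_mul_left_right
  have hPz : P ^ 2 - (1 + 4 * k) * y ^ 2 = 4 * (δ * z ^ 3) := by
    refine mul_left_cancel₀ (pow_ne_zero 2 hδ0) ?_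
    have := cubicForm_sq_add_three_mul_sextic x w
    rw [hz, hP, ← h.eq_sextic] at this
    rw [hk]
    linear_combination this + y ^ 2 * hD
  obtain ⟨m, ρ, μ, γ, hdesc, htrace, him⟩ := exists_isReducedDescent (by omega) hzpos hcop hPz
  have hρ : IsTwistPoint d x w ρ.im := h.of_sq_eq him
  refine ⟨m, ρ, μ, γ, hρ, by rw [htrace, hP], hdesc.cube_eq, ?_⟩
  refine (hE _ (hdesc.mem_normSolutions hk hM hQ)).resolve_left fun hobs ↦ ?_
  have hk3 : ¬ 3 ∣ δ → 3 ∣ k + 1 := by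
    rcases hδ with rfl | ⟨rfl, -⟩ <;> omega
  rcases two_dvd_or_three_dvd_of_isObstructed hodd hk3 hdesc hobs with h2 | h3
  · exact Int.not_even_iff_odd.mpr hρ.odd.1 (even_iff_two_dvd.mpr h2)
  · exact hρ.not_three_dvd h3

theorem not_isTwistPoint_of_forall_isObstructed {d k x w y : ℤ} {δ D M Q : ℕ}
    (hδ : δ = 1 ∨ δ = 3 ∧ 3 ∣ d) (hD : (δ ^ 2 * D : ℤ) = 3 * d) (hk : 1 + 4 * k = -D)
    (hodd : Odd k) (hM : D < 3 * M ^ 2) (hQ : 4 * δ * M ^ 3 < D * Q ^ 2)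
    (hobs : ∀ s ∈ normSolutions δ D M Q, IsObstructed δ s.1 s.2.2) :
    ¬ IsTwistPoint d x w y := fun h ↦ by
  obtain ⟨_, _, _, _, -, -, -, hmem⟩ :=
    h.exists_cube_eq (E := ∅) hδ hD hk hodd hM hQ fun s hs ↦ .inl (hobs s hs)
  exact Finset.notMem_empty _ hmem

variable {x w y : ℤ}

theorem not_isTwistPoint_681 : ¬ IsTwistPoint 681 x w y :=
  not_isTwistPoint_of_forall_isObstructed (k := -57) (δ := 3) (D := 227) (M := 9) (Q := 7)
    (by norm_num) (by norm_num) (by norm_num) (by decide) (by norm_num) (by norm_num)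
    (by decide +kernel)

theorem not_isTwistPoint_1761 : ¬ IsTwistPoint 1761 x w y :=
  not_isTwistPoint_of_forall_isObstructed (k := -147) (δ := 3) (D := 587) (M := 14) (Q := 8)
    (by norm_num) (by norm_num) (by norm_num) (by decide) (by norm_num) (by norm_num)
    (by decide +kernel)

theorem not_isTwistPoint_5281 : ¬ IsTwistPoint 5281 x w y :=
  not_isTwistPoint_of_forall_isObstructed (k := -3961) (δ := 1) (D := 15843) (M := 73) (Q := 15)
    (by norm_num) (by norm_num) (by norm_num) (by decide) (by norm_num) (by norm_num)
    (by decide +kernel)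

theorem not_isTwistPoint_6217 : ¬ IsTwistPoint 6217 x w y :=
  not_isTwistPoint_of_forall_isObstructed (k := -4663) (δ := 1) (D := 18651) (M := 79) (Q := 15)
    (by norm_num) (by norm_num) (by norm_num) (by decide) (by norm_num) (by norm_num)
    (by decide +kernel)

theorem not_isTwistPoint_7057 : ¬ IsTwistPoint 7057 x w y :=
  not_isTwistPoint_of_forall_isObstructed (k := -5293) (δ := 1) (D := 21171) (M := 85) (Q := 15)
    (by norm_num) (by norm_num) (by norm_num) (by decide) (by norm_num) (by norm_num)
    (by decide +kernel)

theorem not_isTwistPoint_7321 : ¬ IsTwistPoint 7321 x w y :=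
  not_isTwistPoint_of_forall_isObstructed (k := -5491) (δ := 1) (D := 21963) (M := 86) (Q := 15)
    (by norm_num) (by norm_num) (by norm_num) (by decide) (by norm_num) (by norm_num)
    (by decide +kernel)

end ImaginaryDescent

/-! ### Cubic residues -/

section CubicResidue

theorem pow_prime_eq_star {p : ℕ} [Fact p.Prime] {κ : ZMod p}
    (hω : (ω : QuadOrder κ) ^ p = star ω) (α : QuadOrder κ) : α ^ p = star α := by
  have : CharP (QuadOrder κ) p := charP_of_injective_algebraMap
    (FaithfulSMul.algebraMap_injective (ZMod p) _) p
  have hα (β : QuadOrder κ) : β = algebraMap _ _ β.re + algebraMap _ _ β.im * ω := by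
    ext <;> simp
  calc α ^ p = algebraMap _ _ (α.re ^ p) + algebraMap _ _ (α.im ^ p) * ω ^ p := by
        conv_lhs => rw [hα α]
        rw [add_pow_char, mul_pow, map_pow, map_pow]
    _ = star α := by
        rw [ZMod.pow_card, ZMod.pow_card, hω]
        ext <;> simp

theorem im_mul_star_pow_eq_zero {p e : ℕ} {m : ℤ} [Fact p.Prime] {κ : ZMod p}
    (hω : (ω : QuadOrder κ) ^ p = star ω) (he : 3 * e = p + 1) (hm : (m : ZMod p) ≠ 0)
    {ρ μ γ : QuadOrder κ} (h : (m : QuadOrder κ) ^ 3 * ρ = μ * γ ^ 3) :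
    ((ρ * star μ) ^ e).im = 0 := by
  have hγ : (γ ^ 3) ^ e = algebraMap _ _ γ.norm := by
    rw [← pow_mul, he, pow_succ', pow_prime_eq_star hω, algebraMap_norm_eq_mul_star]
  have key : (m : QuadOrder κ) ^ (3 * e) * (ρ * star μ) ^ e =
      algebraMap _ _ (μ.norm ^ e * γ.norm) := by
    calc _ = ((m : QuadOrder κ) ^ 3 * ρ * star μ) ^ e := by ring
      _ = (μ * star μ * γ ^ 3) ^ e := by rw [h]; ring
      _ = _ := by rw [mul_pow, hγ, ← algebraMap_norm_eq_mul_star, ← map_pow, ← map_mul]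
  have him := congrArg QuadraticAlgebra.im key
  rw [← Int.cast_pow, ← zsmul_eq_mul, im_smul, algebraMap_im, zsmul_eq_mul, Int.cast_pow] at him
  exact (mul_eq_zero.mp him).resolve_left (pow_ne_zero _ hm)

/-- Reduction of a quadratic order modulo `n`. -/
def reduction (k : ℤ) (n : ℕ) : QuadOrder k →+* QuadOrder (k : ZMod n) :=
  evalHom (u := (ω : QuadOrder (k : ZMod n))) (by ext <;> simp)

theorem reduction_eq (k : ℤ) (n : ℕ) (α : QuadOrder k) :
    reduction k n α = ⟨α.re, α.im⟩ := by
  rw [reduction, evalHom_apply]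
  ext <;> simp

theorem im_smul_mul_star_pow_eq_zero {p e : ℕ} {k m : ℤ} [Fact p.Prime]
    (hω : (ω : QuadOrder (k : ZMod p)) ^ p = star ω) (he : 3 * e = p + 1) (hm : (m : ZMod p) ≠ 0)
    {ρ μ γ : QuadOrder k} (h : (m : QuadOrder k) ^ 3 * ρ = μ * γ ^ 3) (t : ZMod p) :
    ((t • ⟨ρ.re, ρ.im⟩ * star ⟨μ.re, μ.im⟩ : QuadOrder (k : ZMod p)) ^ e).im = 0 := by
  have hred := congrArg (reduction k p) h
  simp only [map_mul, map_pow, map_intCast] at hred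
  rw [smul_mul_assoc, smul_pow, im_smul, ← reduction_eq, ← reduction_eq,
    im_mul_star_pow_eq_zero hω he hm hred, smul_zero]

theorem IsTwistPoint.exists_chart_of_cube_eq {p e : ℕ} [Fact p.Prime] {k d δ x w m : ℤ}
    {ρ μ γ : QuadOrder k} (h : IsTwistPoint d x w ρ.im) (htrace : δ * ρ.trace = cubicForm x w)
    (hcube : (m : QuadOrder k) ^ 3 * ρ = μ * γ ^ 3)
    (hω : (ω : QuadOrder (k : ZMod p)) ^ p = star ω) (he : 3 * e = p + 1)
    (hm : (m : ZMod p) ≠ 0) :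
    ∃ t A Y : ZMod p, t ≠ 0 ∧ (t * w = 1 ∨ t * w = 0 ∧ t * x = 1) ∧
      d * Y ^ 2 = sextic (t * x) (t * w) ∧ δ * (2 * A + Y) = cubicForm (t * x) (t * w) ∧
      ((⟨A, Y⟩ * star ⟨μ.re, μ.im⟩ : QuadOrder (k : ZMod p)) ^ e).im = 0 := by
  obtain ⟨t, ht, hchart, heq⟩ := (h.map (Int.castRingHom (ZMod p))).exists_chart
  simp only [eq_intCast] at hchart heq
  refine ⟨t, t ^ 3 * ρ.re, t ^ 3 * ρ.im, ht, hchart, heq, ?_,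
    im_smul_mul_star_pow_eq_zero hω he hm hcube (t ^ 3)⟩
  have := congrArg (Int.castRingHom (ZMod p)) htrace
  rw [map_cubicForm, eq_intCast, eq_intCast, eq_intCast, trace_def] at this
  rw [cubicForm_mul_mul, ← this]
  push_cast
  ring

end CubicResidue

section D1329

instance : Fact (Nat.Prime 23) := ⟨by norm_num⟩

theorem im_pow_ne_zero_of_sextic_eq_1329 : ∀ X W : ZMod 23, W = 1 ∨ W = 0 ∧ X = 1 →
    ∀ Y, 1329 * Y ^ 2 = sextic X W → ∀ A, 3 * (2 * A + Y) = cubicForm X W →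
      ((⟨A, Y⟩ * star ⟨33, 3⟩ : QuadOrder ((-111 : ℤ) : ZMod 23)) ^ 8).im ≠ 0 := by
  simp only [sextic, cubicForm]
  decide +kernel

theorem not_isTwistPoint_1329 {x w y : ℤ} : ¬ IsTwistPoint 1329 x w y := fun h ↦ by
  obtain ⟨m, ρ, μ, γ, hρ, htrace, hcube, hE⟩ := h.exists_cube_eq (k := -111) (δ := 3) (D := 443)
    (M := 13) (Q := 8) (E := {(9, 69, 3)}) (by norm_num) (by norm_num) (by norm_num) (by decide)
    (by norm_num) (by norm_num) (by decide +kernel)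
  simp only [Finset.mem_singleton, Prod.mk.injEq] at hE
  obtain ⟨hm, ht, hq⟩ := hE
  obtain rfl : m = 9 := by omega
  obtain rfl : μ = ⟨33, 3⟩ := by
    rw [trace_def] at ht
    ext <;> dsimp only <;> omega
  obtain ⟨t, A, Y, -, hchart, heq, htr, him⟩ := hρ.exists_chart_of_cube_eq (p := 23) (e := 8)
    htrace hcube (by decide +kernel) (by norm_num) (by decide +kernel)
  exact im_pow_ne_zero_of_sextic_eq_1329 _ _ hchart Y (by simpa using heq) A
    (by simpa using htr) (by simpa using him)

end D1329

/-! ### Quadratic symbols of linear forms and `d = 2913` -/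

section JacobiSymbol

theorem jacobiSym_eq_one_of_forall_prime {a : ℤ} {n : ℕ}
    (h : ∀ p : ℕ, p.Prime → p ∣ n → jacobiSym a p = 1) : jacobiSym a n = 1 := by
  refine List.prod_eq_one fun s hs ↦ ?_
  obtain ⟨p, hp, rfl⟩ := List.mem_pmap.mp hs
  have hprime := Nat.prime_of_mem_primeFactorsList hp
  have : Fact p.Prime := ⟨hprime⟩
  rw [jacobiSym.legendreSym.to_jacobiSym]
  exact h p hprime (Nat.dvd_of_mem_primeFactorsList hp)

theorem jacobiSym_eq_one_of_forall_odd_prime {N : ℕ} (hN : N % 8 = 1) {L : ℤ} (hL : L ≠ 0)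
    (h : ∀ p : ℕ, p.Prime → p ≠ 2 → (p : ℤ) ∣ L → jacobiSym N p = 1) : jacobiSym L N = 1 := by
  have hodd : Odd N := Nat.odd_iff.mpr (by omega)
  have htwo : jacobiSym 2 N = 1 := by
    rw [jacobiSym.at_two hodd, ZMod.χ₈_nat_mod_eight, hN]
    decide
  have habs : jacobiSym L N = jacobiSym L.natAbs N := by
    rcases L.natAbs_eq with hL' | hL' <;> nth_rw 1 [hL']
    rw [jacobiSym.neg _ hodd, ZMod.χ₄_nat_one_mod_four (by omega), one_mul]
  obtain ⟨a, b, hb, hab⟩ := Nat.exists_eq_two_pow_mul_odd (Int.natAbs_ne_zero.mpr hL)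
  rw [habs, hab, Nat.cast_mul, Nat.cast_pow, Nat.cast_two, jacobiSym.mul_left, jacobiSym.pow_left,
    htwo, one_pow, one_mul, ← jacobiSym.quadratic_reciprocity_one_mod_four (by omega) hb]
  refine jacobiSym_eq_one_of_forall_prime fun p hp hpb ↦ h p hp ?_ ?_
  · rintro rfl
    exact (Nat.not_even_iff_odd.mpr hb) (even_iff_two_dvd.mpr hpb)
  · exact Int.natCast_dvd.mpr (hab ▸ dvd_mul_of_dvd_right hpb _)

theorem jacobiSym_eq_quadraticChar (p : ℕ) [Fact p.Prime] (a : ℤ) :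
    jacobiSym a p = quadraticChar (ZMod p) a := by
  rw [← jacobiSym.legendreSym.to_jacobiSym]
  rfl

theorem jacobiSym_eq_one_of_dvd_sub_sq {p : ℕ} (hp : p.Prime) {a y z : ℤ}
    (h : (p : ℤ) ∣ a * y ^ 2 - z ^ 2) (hz : ¬ (p : ℤ) ∣ z) : jacobiSym a p = 1 := by
  have : Fact p.Prime := ⟨hp⟩
  have hz' : (z : ZMod p) ≠ 0 := fun h0 ↦ hz ((ZMod.intCast_zmod_eq_zero_iff_dvd _ _).mp h0)
  have heq : (a : ZMod p) * y ^ 2 = z ^ 2 := by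
    have := (ZMod.intCast_zmod_eq_zero_iff_dvd _ p).mpr h
    push_cast at this
    exact sub_eq_zero.mp this
  have hchar : quadraticChar (ZMod p) (a * y ^ 2) = 1 := by
    rw [heq]
    exact quadraticChar_sq_one' hz'
  have hy : (y : ZMod p) ≠ 0 := fun h0 ↦ hz' <| by
    simpa [h0] using heq.symm
  rwa [map_mul, quadraticChar_sq_one' hy, mul_one, ← jacobiSym_eq_quadraticChar] at hchar

theorem not_dvd_of_jacobiSym_ne_zero {p : ℕ} [Fact p.Prime] {a : ℤ} (h : jacobiSym a p ≠ 0) :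
    ¬ (p : ℤ) ∣ a := fun hdvd ↦ h <| by
  rw [jacobiSym_eq_quadraticChar, (ZMod.intCast_zmod_eq_zero_iff_dvd a p).mpr hdvd,
    quadraticChar_zero]

end JacobiSymbol

section D2913

theorem sextic_sub_dvd_sextic_sub (a b c : ℤ) : a - b ∣ sextic a c - sextic b c := by
  have hab : b ≡ a [ZMOD a - b] := Int.modEq_iff_dvd.mpr dvd_rfl
  refine Int.ModEq.dvd ?_
  rw [sextic, sextic]
  gcongr

theorem IsTwistPoint.not_dvd_right_of_dvd_left {d x w y : ℤ} (h : IsTwistPoint d x w y) {p : ℤ}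
    (hp : Prime p) (hx : p ∣ x) : ¬ p ∣ w :=
  fun hw ↦ hp.not_isUnit (h.isCoprime.isUnit_of_dvd' hx hw)

theorem IsTwistPoint.jacobiSym_eq_one_of_sextic_eq_33 {x w y m n : ℤ}
    (h : IsTwistPoint 2913 x w y) (hm : m = 1 ∨ m = 2) (hmn : sextic n m = 33)
    (h11 : ¬ 11 ∣ m * x - n * w) : jacobiSym (m * x - n * w) 10681 = 1 := by
  refine jacobiSym_eq_one_of_forall_odd_prime (N := 10681) (by norm_num)
    (fun h0 ↦ h11 (h0 ▸ dvd_zero _)) fun p hp hp2 hpL ↦ ?_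
  have hpp := Nat.prime_iff_prime_int.mp hp
  rcases eq_or_ne p 3 with rfl | hp3
  · norm_num
  refine jacobiSym_eq_one_of_dvd_sub_sq hp (y := 3 * m ^ 3 * y) (z := 33 * w ^ 3) ?_ ?_
  · have hdvd := hpL.trans (sextic_sub_dvd_sextic_sub (m * x) (n * w) (m * w))
    rw [sextic_mul_mul, mul_comm n, mul_comm m w, sextic_mul_mul, hmn, ← h.eq_sextic] at hdvd
    refine (hdvd.mul_left 33).trans (dvd_of_eq ?_)
    push_cast
    ring
  · intro hdvd
    have hpw : (p : ℤ) ∣ w := by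
      refine (hpp.dvd_or_dvd hdvd).elim (fun h33 ↦ ?_) hpp.dvd_of_dvd_pow
      rcases (Nat.Prime.dvd_mul hp).mp (show p ∣ 3 * 11 by exact_mod_cast h33) with h3 | h3
      · exact absurd ((Nat.prime_dvd_prime_iff_eq hp (by norm_num)).mp h3) hp3
      · obtain rfl := (Nat.prime_dvd_prime_iff_eq hp (by norm_num)).mp h3
        exact absurd hpL h11
    have hpx : (p : ℤ) ∣ m * x := (dvd_sub_left (hpw.mul_left n)).mp hpL
    refine (hpp.dvd_or_dvd hpx).elim (fun hpm ↦ ?_) fun hx ↦ h.not_dvd_right_of_dvd_left hpp hx hpw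
    rcases hm with rfl | rfl
    · exact hpp.not_dvd_one hpm
    · exact hp2 ((Nat.prime_dvd_prime_iff_eq hp Nat.prime_two).mp (by exact_mod_cast hpm))

instance : Fact (Nat.Prime 11) := ⟨by norm_num⟩
instance : Fact (Nat.Prime 971) := ⟨by norm_num⟩

theorem quadraticChar_eleven_of_mul_eq_zero : ∀ x w : ZMod 11, x ≠ 0 ∨ w ≠ 0 →
    x = 0 ∨ w = 0 ∨ x + w = 0 →
      quadraticChar (ZMod 11) ((x - w) * (x + 2 * w)) = 1 ∧
      quadraticChar (ZMod 11) ((x - w) * (2 * x + w)) = -1 := by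
  decide +kernel

theorem quadraticChar_971_of_sextic_eq_zero : ∀ x : ZMod 971, sextic x 1 = 0 →
    quadraticChar (ZMod 971) ((x - 1) * (x + 2)) = 1 →
      quadraticChar (ZMod 971) ((x - 1) * (2 * x + 1)) ≠ -1 := by
  simp only [sextic]
  decide +kernel

theorem quadraticChar_971_eq_quadraticChar_11 {L₁ L₂ : ℤ} (h₁ : jacobiSym L₁ 10681 = 1)
    (h₂ : jacobiSym L₂ 10681 = 1) :
    quadraticChar (ZMod 971) (L₁ * L₂) = quadraticChar (ZMod 11) (L₁ * L₂) := by
  have hmul : jacobiSym (L₁ * L₂) 971 * jacobiSym (L₁ * L₂) 11 = 1 := by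
    rw [← jacobiSym.mul_right, jacobiSym.mul_left]
    exact (congrArg₂ (· * ·) h₁ h₂).trans (one_mul 1)
  rw [← Int.cast_mul, ← Int.cast_mul, ← jacobiSym_eq_quadraticChar, ← jacobiSym_eq_quadraticChar]
  exact Int.eq_of_mul_eq_one hmul

theorem IsTwistPoint.quadraticChar_971_lines {x w y : ℤ} (h : IsTwistPoint 2913 x w y)
    (h11 : (x : ZMod 11) = 0 ∨ (w : ZMod 11) = 0 ∨ (x : ZMod 11) + w = 0) :
    quadraticChar (ZMod 971) ((x - w) * (x + 2 * w)) = 1 ∧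
      quadraticChar (ZMod 971) ((x - w) * (2 * x + w)) = -1 := by
  have h0 := (h.map (Int.castRingHom (ZMod 11))).ne_zero_or_ne_zero
  obtain ⟨hχ₁, hχ₂⟩ := quadraticChar_eleven_of_mul_eq_zero _ _ h0 h11
  have hline {m n : ℤ} (hm : m = 1 ∨ m = 2) (hmn : sextic n m = 33)
      (hL : ((m * x - n * w : ℤ) : ZMod 11) ≠ 0) : jacobiSym (m * x - n * w) 10681 = 1 :=
    h.jacobiSym_eq_one_of_sextic_eq_33 hm hmn fun hdvd ↦
      hL ((ZMod.intCast_zmod_eq_zero_iff_dvd _ 11).mpr hdvd)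
  have hne₁ : ((x : ZMod 11) - w) * (x + 2 * w) ≠ 0 := fun h0 ↦ by simp [h0] at hχ₁
  have hne₂ : ((x : ZMod 11) - w) * (2 * x + w) ≠ 0 := fun h0 ↦ by simp [h0] at hχ₂
  have hJ₁ := hline (m := 1) (n := 1) (.inl rfl) (by decide)
    (by simpa using left_ne_zero_of_mul hne₁)
  have hJ₂ := hline (m := 1) (n := -2) (.inl rfl) (by decide)
    (by simpa using right_ne_zero_of_mul hne₁)
  have hJ₃ := hline (m := 2) (n := -1) (.inr rfl) (by decide)
    (by simpa using right_ne_zero_of_mul hne₂)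
  have hχ := quadraticChar_971_eq_quadraticChar_11 hJ₁ hJ₂
  have hχ' := quadraticChar_971_eq_quadraticChar_11 hJ₁ hJ₃
  push_cast at hχ hχ'
  simp only [one_mul, neg_mul, sub_neg_eq_add] at hχ hχ'
  exact ⟨hχ.trans hχ₁, hχ'.trans hχ₂⟩

theorem IsTwistPoint.ne_zero_mod_eleven {x w y : ℤ} (h : IsTwistPoint 2913 x w y) :
    ¬ ((x : ZMod 11) = 0 ∨ (w : ZMod 11) = 0 ∨ (x : ZMod 11) + w = 0) := fun h11 ↦ by
  obtain ⟨hχ₁, hχ₂⟩ := h.quadraticChar_971_lines h11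
  obtain ⟨t, ht, hchart, heq⟩ := (h.map (Int.castRingHom (ZMod 971))).exists_chart
  simp only [eq_intCast] at hchart heq
  have hroot : sextic (t * x : ZMod 971) (t * w) = 0 := by
    rw [← heq, show ((2913 : ℤ) : ZMod 971) = 0 by decide, zero_mul]
  have hscale (L : ZMod 971) : quadraticChar (ZMod 971) (t ^ 2 * L) = quadraticChar _ L := by
    rw [map_mul, quadraticChar_sq_one' ht, one_mul]
  rcases hchart with htw | ⟨htw, htx⟩
  · rw [htw] at hroot
    refine quadraticChar_971_of_sextic_eq_zero _ hroot
      (((congrArg _ ?_).trans (hscale _)).trans hχ₁) (((congrArg _ ?_).trans (hscale _)).trans hχ₂)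
    · linear_combination (2 * t * w + 2 - t * x) * htw
    · linear_combination (t * x + t * w + 1) * htw
  · simp [htw, htx, sextic] at hroot

theorem eq_zero_of_im_pow_eq_zero_2913 : ∀ X W : ZMod 11, W = 1 ∨ W = 0 ∧ X = 1 →
    ∀ Y, 2913 * Y ^ 2 = sextic X W → ∀ A, 3 * (2 * A + Y) = cubicForm X W →
      ((⟨A, Y⟩ * star ⟨11, 1⟩ : QuadOrder ((-243 : ℤ) : ZMod 11)) ^ 4).im = 0 →
        X = 0 ∨ W = 0 ∨ X + W = 0 := by
  simp only [sextic, cubicForm]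
  decide +kernel

theorem im_pow_three_eq_im_of_eq_cube {a b : ZMod 9} {β : QuadOrder ((-243 : ℤ) : ZMod 9)}
    (hβ : β = ⟨a, b⟩ ^ 3) (h : β.re + β.im = 0) : β.im ^ 3 = β.im := by
  subst hβ
  revert a b
  decide +kernel

theorem sextic_modEq_and_cubicForm_modEq {x w : ℤ} (h : 3 ∣ x - w) :
    sextic x w ≡ 33 * w ^ 6 [ZMOD 27] ∧ cubicForm x w ≡ 3 * w ^ 3 [ZMOD 27] := by
  obtain ⟨u, hu⟩ := h
  obtain rfl : x = w + 3 * u := by linarith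
  refine ⟨(Int.modEq_iff_dvd.mpr ⟨10 * u * w ^ 5 + 35 * u ^ 2 * w ^ 4 + 70 * u ^ 3 * w ^ 3 +
    90 * u ^ 4 * w ^ 2 + 72 * u ^ 5 * w + 27 * u ^ 6, ?_⟩).symm,
    (Int.modEq_iff_dvd.mpr ⟨u * w ^ 2 + 2 * u ^ 2 * w + u ^ 3, ?_⟩).symm⟩
  · rw [sextic]
    ring
  · rw [cubicForm]
    ring

theorem IsTwistPoint.re_pow_three_ne_re {x w k : ℤ} {ρ : QuadOrder k}
    (h : IsTwistPoint 2913 x w ρ.im) (htrace : 3 * ρ.trace = cubicForm x w) :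
    (ρ.re : ZMod 9) ^ 3 ≠ ρ.re := by
  have key : ∀ w y A : ZMod 9, 3 * w ≠ 0 → 971 * y ^ 2 = 11 * w ^ 6 → 2 * A + y = w ^ 3 →
      A ^ 3 ≠ A := by
    decide +kernel
  have hxw : 3 ∣ x - w :=
    three_dvd_sub_of_three_dvd_sextic ⟨971 * ρ.im ^ 2, by rw [← h.eq_sextic]; ring⟩
  have hw : ¬ 3 ∣ w := fun hw ↦
    h.not_dvd_right_of_dvd_left Int.prime_three ((dvd_sub_left hw).mp hxw) hw
  obtain ⟨hF, hP⟩ := sextic_modEq_and_cubicForm_modEq hxw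
  have hF' : 971 * ρ.im ^ 2 ≡ 11 * w ^ 6 [ZMOD 9] := by
    refine Int.ModEq.mul_left_cancel' (c := 3) (by norm_num) ?_
    rw [← h.eq_sextic] at hF
    convert hF using 1 <;> ring
  have hP' : 2 * ρ.re + ρ.im ≡ w ^ 3 [ZMOD 9] := by
    refine Int.ModEq.mul_left_cancel' (c := 3) (by norm_num) ?_
    rw [← htrace, trace_def] at hP
    simpa using hP
  refine key w ρ.im ρ.re (fun h0 ↦ hw ?_) ?_ ?_
  · have := (ZMod.intCast_zmod_eq_zero_iff_dvd (3 * w) 9).mp (by simpa using h0)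
    omega
  · exact_mod_cast (ZMod.intCast_eq_intCast_iff _ _ 9).mpr hF'
  · exact_mod_cast (ZMod.intCast_eq_intCast_iff _ _ 9).mpr hP'

theorem re_pow_three_eq_re_of_cube_eq {ρ γ : QuadOrder (-243 : ℤ)}
    (h : ((9 : ℤ) : QuadOrder (-243 : ℤ)) ^ 3 * ρ = ⟨0, 3⟩ * γ ^ 3) :
    (ρ.re : ZMod 9) ^ 3 = ρ.re := by
  rw [← Int.cast_pow, ← zsmul_eq_mul] at h
  have hre := congrArg QuadraticAlgebra.re h
  have him := congrArg QuadraticAlgebra.im h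
  simp only [re_smul, im_smul, re_mul, im_mul, smul_eq_mul] at hre him
  have hre' : ρ.re = - (γ ^ 3).im := by linarith
  have him' : (γ ^ 3).re + (γ ^ 3).im = 9 * (27 * ρ.im) := by linarith
  have hγ : reduction (-243) 9 (γ ^ 3) = ⟨γ.re, γ.im⟩ ^ 3 := by
    rw [map_pow, reduction_eq]
  rw [reduction_eq] at hγ
  have hsum : ((γ ^ 3).re : ZMod 9) + (γ ^ 3).im = 0 := by
    rw [← Int.cast_add, him']
    exact (ZMod.intCast_zmod_eq_zero_iff_dvd _ 9).mpr (dvd_mul_right _ _)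
  rw [hre', Int.cast_neg, Odd.neg_pow (by decide), im_pow_three_eq_im_of_eq_cube hγ hsum]

theorem not_isTwistPoint_2913 {x w y : ℤ} : ¬ IsTwistPoint 2913 x w y := fun h ↦ by
  obtain ⟨m, ρ, μ, γ, hρ, htrace, hcube, hE⟩ := h.exists_cube_eq (k := -243) (δ := 3) (D := 971)
    (M := 18) (Q := 10) (E := {(9, 3, 3), (5, 23, 1)}) (by norm_num) (by norm_num) (by norm_num)
    (by decide) (by norm_num) (by norm_num) (by decide +kernel)
  simp only [Finset.mem_insert, Finset.mem_singleton, Prod.mk.injEq] at hE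
  rw [trace_def] at hE
  rcases hE with ⟨hm, ht, hq⟩ | ⟨hm, ht, hq⟩
  · obtain rfl : m = 9 := by omega
    obtain rfl : μ = ⟨0, 3⟩ := by ext <;> dsimp only <;> omega
    exact hρ.re_pow_three_ne_re htrace (re_pow_three_eq_re_of_cube_eq hcube)
  · obtain rfl : m = 5 := by omega
    obtain rfl : μ = ⟨11, 1⟩ := by ext <;> dsimp only <;> omega
    obtain ⟨t, A, Y, ht, hchart, heq, htr, him⟩ := hρ.exists_chart_of_cube_eq (p := 11) (e := 4)
      htrace hcube (by decide +kernel) (by norm_num) (by decide +kernel)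
    have hres := eq_zero_of_im_pow_eq_zero_2913 _ _ hchart Y (by simpa using heq) A
      (by simpa using htr) (by simpa using him)
    rw [← mul_add] at hres
    simp only [mul_eq_zero, ht, false_or] at hres
    exact h.ne_zero_mod_eleven hres

end D2913

/-! ### Descent in the real quadratic order and `d = 3769` -/

section RealDescent

/-- The cubic form `P'` in the identity `P'² - 9 F = -8 Z³` for `F = sextic`, `Z = quadForm`,
which exhibits `P' + 3 y √d` as a cube up to a small multiplier in a real quadratic order. -/
def realCubicForm {R : Type*} [CommRing R] (x w : R) : R :=
  x ^ 3 - 3 * x ^ 2 * w - 6 * x * w ^ 2 - w ^ 3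

theorem realCubicForm_sq_sub_nine_mul_sextic {R : Type*} [CommRing R] (x w : R) :
    realCubicForm x w ^ 2 - 9 * sextic x w = -8 * quadForm x w ^ 3 := by
  rw [realCubicForm, sextic, quadForm]
  ring

theorem realCubicForm_mul_mul {R : Type*} [CommRing R] (t x w : R) :
    realCubicForm (t * x) (t * w) = t ^ 3 * realCubicForm x w := by
  rw [realCubicForm, realCubicForm]
  ring

theorem map_realCubicForm {R S : Type*} [CommRing R] [CommRing S] (f : R →+* S) (x w : R) :
    f (realCubicForm x w) = realCubicForm (f x) (f w) := by
  simp only [realCubicForm, map_sub, map_mul, map_pow, map_ofNat]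

namespace IsTwistPoint

variable {d x w y : ℤ}

theorem not_three_dvd_quadForm (h : IsTwistPoint d x w y) (hd : ¬ 3 ∣ d) :
    ¬ 3 ∣ quadForm x w := by
  rintro ⟨z, hz⟩
  have key := cubicForm_sq_add_three_mul_sextic x w
  rw [hz, ← h.eq_sextic] at key
  obtain ⟨P, hP⟩ : 3 ∣ cubicForm x w :=
    Int.prime_three.dvd_of_dvd_pow (n := 2) ⟨36 * z ^ 3 - d * y ^ 2, by linear_combination key⟩
  rw [hP] at key
  have h3 : 3 ∣ d * y ^ 2 := ⟨12 * z ^ 3 - P ^ 2, by linarith⟩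
  exact (Int.prime_three.dvd_or_dvd h3).elim hd fun hy ↦
    h.not_three_dvd (Int.prime_three.dvd_of_dvd_pow hy)

theorem exists_isCubeDescent_real {k : ℤ} (h : IsTwistPoint d x w y) (hk : 1 + 4 * k = d)
    (hd : 0 < d) (hd3 : ¬ 3 ∣ d) (hsq : ¬ IsSquare d) :
    ∃ (m : ℤ) (ρ μ γ : QuadOrder k), IsCubeDescent (-2) (quadForm x w) m ρ μ γ ∧
      ρ.trace = realCubicForm x w ∧ ρ.im = 3 * y ∧ 0 ≤ μ.im ∧ m ≠ 0 ∧ 3 * m ^ 2 ≤ d ∧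
      27 * (μ.trace ^ 2 + d * μ.im ^ 2) ^ 2 ≤ 4096 * d ^ 3 := by
  subst hk
  have hid : realCubicForm x w ^ 2 - (1 + 4 * k) * (3 * y) ^ 2 =
      4 * (-2 * quadForm x w ^ 3) := by
    linear_combination realCubicForm_sq_sub_nine_mul_sextic x w - 9 * h.eq_sextic
  obtain ⟨ρ, htrace, him⟩ := exists_trace_eq_im_eq (k := k) ⟨_, hid⟩
  have hρ : ρ.norm = -2 * quadForm x w ^ 3 := by
    have := four_mul_norm ρ
    rw [htrace, him, hid] at this
    linarith
  have hcop : IsCoprime (quadForm x w) ρ.im := by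
    rw [him]
    exact ((Int.prime_three.coprime_iff_not_dvd.mpr (h.not_three_dvd_quadForm hd3)).symm).mul_right
      h.isCoprime_quadForm
  obtain ⟨m, μ, γ, hdesc, hm, hle, hbound⟩ :=
    exists_isCubeDescent_of_discr_pos hd hsq (by norm_num) h.quadForm_pos hcop hρ
  wlog hμ : 0 ≤ μ.im generalizing μ γ
  · refine this _ _ hdesc.neg ?_ ?_
    · simpa using hbound
    · exact neg_nonneg.mpr (not_le.mp hμ).le
  · exact ⟨m, ρ, μ, γ, hdesc, htrace, him, hμ, hm, hle, by linarith⟩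

end IsTwistPoint

theorem pow_eq_pow_of_mul_eq_mul_cube {p e : ℕ} [Fact p.Prime] (he : 3 * e + 1 = p)
    {m r s c : ZMod p} (hm : m ≠ 0) (hr : r ≠ 0) (h : m ^ 3 * r = s * c ^ 3) :
    r ^ e = s ^ e := by
  have hcube {u : ZMod p} (hu : u ≠ 0) : (u ^ 3) ^ e = 1 := by
    rw [← pow_mul, show 3 * e = p - 1 by omega, ZMod.pow_card_sub_one_eq_one hu]
  have hc : c ≠ 0 := by
    rintro rfl
    simp [hm, hr] at h
  calc r ^ e = (m ^ 3 * r) ^ e := by rw [mul_pow, hcube hm, one_mul]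
    _ = s ^ e := by rw [h, mul_pow, hcube hc, mul_one]

end RealDescent

section D3769

instance : Fact (Nat.Prime 13) := ⟨by norm_num⟩

set_option synthInstance.maxSize 1000 in
theorem pow_four_eq_three_of_sextic_eq_3769 : ∀ x w : ZMod 13, x ≠ 0 ∨ w ≠ 0 →
    ∀ y, 3769 * y ^ 2 = sextic x w → ∀ A, 2 * A + y = cubicForm x w →
      (∃ c, 19 ^ 3 * (A + y * 9) = 72 * c ^ 3) → (∃ c, 19 ^ 3 * (A + y * 5) = 68 * c ^ 3) →
        ∀ B, 2 * B + 3 * y = realCubicForm x w → (B + 3 * y * 11) ^ 4 = 3 := by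
  simp only [sextic, cubicForm, realCubicForm]
  decide +kernel

theorem IsTwistPoint.exists_pow_four_eq_three {x w y : ℤ} (h : IsTwistPoint 3769 x w y) :
    ∃ y', IsTwistPoint 3769 x w y' ∧ ∀ B : ℤ, 2 * B + 3 * y' = realCubicForm x w →
      ((B : ZMod 13) + 3 * y' * 11) ^ 4 = 3 := by
  obtain ⟨m, ρ, μ, γ, hρ, htrace, hcube, hE⟩ := h.exists_cube_eq (k := -2827) (δ := 1)
    (D := 11307) (M := 62) (Q := 10) (E := {(19, 127, 1)}) (by norm_num) (by norm_num)
    (by norm_num) (by decide) (by norm_num) (by norm_num) (by decide +kernel)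
  simp only [Finset.mem_singleton, Prod.mk.injEq, trace_def] at hE htrace
  obtain ⟨hm, ht, hq⟩ := hE
  obtain rfl : m = 19 := by omega
  obtain rfl : μ = ⟨63, 1⟩ := by ext <;> dsimp only <;> omega
  have heval {u : ZMod 13} (hu : u * u = (-2827 : ℤ) + u) :
      ∃ c, 19 ^ 3 * ((ρ.re : ZMod 13) + ρ.im * u) = (63 + u) * c ^ 3 := by
    refine ⟨γ.re + γ.im * u, ?_⟩
    have := congrArg (evalHom hu) hcube
    simp only [map_mul, map_pow, map_intCast, evalHom_apply] at this
    simpa using this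
  refine ⟨ρ.im, hρ, fun B hB ↦ ?_⟩
  have h13 := hρ.map (Int.castRingHom (ZMod 13))
  refine pow_four_eq_three_of_sextic_eq_3769 _ _ h13.ne_zero_or_ne_zero _ h13.eq_sextic ρ.re ?_
    (heval (u := 9) (by decide +kernel)) (heval (u := 5) (by decide +kernel)) B ?_
  · rw [← map_cubicForm, ← htrace]
    simp
  · rw [← map_realCubicForm, ← hB]
    simp

/-- The possible values of `(μ.re, μ.im)` in the real descent for `d = 3769`. -/
def multipliers3769 : Finset (ℤ × ℤ) :=
  {(470, 15), (84, 2), (-186, 6), (-82, 3), (-423, 15), (-568, 20)}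

theorem mem_multipliers3769_of_sq_eq : ∀ m ∈ Finset.Icc (-35 : ℤ) 35, m ≠ 0 →
    ∀ q ∈ Finset.Ico (0 : ℤ) 28, ∀ s ∈ ({Int.sqrt (3769 * q ^ 2 - 8 * m ^ 3)} : Finset ℤ),
      s ^ 2 = 3769 * q ^ 2 - 8 * m ^ 3 → s ^ 2 + 3769 * q ^ 2 ≤ 2851206 →
        ∀ t ∈ ({s, -s} : Finset ℤ),
          ((m : ZMod 13) ≠ 0 → (((t - q) / 2 : ℤ) + q * 11 : ZMod 13) ^ 4 = 3) →
            ((t - q) / 2, q) ∈ multipliers3769 ∧ (m : ZMod 89) ≠ 0 := by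
  decide +kernel

theorem IsCubeDescent.mem_multipliers3769 {z m : ℤ} {ρ μ γ : QuadOrder (942 : ℤ)}
    (h : IsCubeDescent (-2) z m ρ μ γ) (hμ : 0 ≤ μ.im) (hm : m ≠ 0) (hm2 : 3 * m ^ 2 ≤ 3769)
    (hbound : 27 * (μ.trace ^ 2 + 3769 * μ.im ^ 2) ^ 2 ≤ 4096 * 3769 ^ 3)
    (h13 : ((ρ.re : ZMod 13) + ρ.im * 11) ^ 4 = 3) :
    (μ.re, μ.im) ∈ multipliers3769 ∧ (m : ZMod 89) ≠ 0 := by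
  have hsq : μ.trace ^ 2 = 3769 * μ.im ^ 2 - 8 * m ^ 3 := by
    linear_combination h.trace_sq_eq
  have hle : μ.trace ^ 2 + 3769 * μ.im ^ 2 ≤ 2851206 := by nlinarith
  have hre : (μ.trace - μ.im) / 2 = μ.re := by
    rw [trace_def]
    omega
  have hsqrt : Int.sqrt (3769 * μ.im ^ 2 - 8 * m ^ 3) = |μ.trace| := by
    rw [← hsq, sq, Int.sqrt_eq, Int.natCast_natAbs]
  have hmem : m ∈ Finset.Icc (-35 : ℤ) 35 := Finset.mem_Icc.mpr ⟨by nlinarith, by nlinarith⟩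
  have hq : μ.im ∈ Finset.Ico (0 : ℤ) 28 := Finset.mem_Ico.mpr ⟨hμ, by nlinarith⟩
  have ht : μ.trace ∈ ({|μ.trace|, -|μ.trace|} : Finset ℤ) := by
    rcases abs_choice μ.trace with h0 | h0 <;> simp [h0]
  rw [← hre]
  refine mem_multipliers3769_of_sq_eq m hmem hm _ hq _ (Finset.mem_singleton.mpr hsqrt.symm)
    (by rw [sq_abs, hsq]) (by rwa [sq_abs]) _ ht fun hm13 ↦ ?_
  have heval : (m : ZMod 13) ^ 3 * (ρ.re + ρ.im * 11) =
      (μ.re + μ.im * 11) * (γ.re + γ.im * 11) ^ 3 := by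
    have := congrArg (evalHom (S := ZMod 13) (u := 11) (by decide +kernel)) h.cube_eq
    simpa only [map_mul, map_pow, map_intCast, evalHom_apply] using this
  rw [hre, ← h13]
  refine (pow_eq_pow_of_mul_eq_mul_cube (by norm_num) hm13 ?_ heval).symm
  intro h0
  rw [h0] at h13
  exact absurd h13 (by decide)

theorem IsTwistPoint.exists_real_cube_eq_3769 {x w y : ℤ} (h : IsTwistPoint 3769 x w y) :
    ∃ (y' m : ℤ) (ρ μ γ : QuadOrder (942 : ℤ)), IsTwistPoint 3769 x w y' ∧
      ρ.trace = realCubicForm x w ∧ ρ.im = 3 * y' ∧ (m : QuadOrder (942 : ℤ)) ^ 3 * ρ = μ * γ ^ 3 ∧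
      (μ.re, μ.im) ∈ multipliers3769 ∧ (m : ZMod 89) ≠ 0 := by
  obtain ⟨y', hy', h13⟩ := h.exists_pow_four_eq_three
  obtain ⟨m, ρ, μ, γ, hdesc, htrace, him, hμ, hm, hm2, hbound⟩ :=
    hy'.exists_isCubeDescent_real (k := 942) (by norm_num) (by norm_num) (by norm_num)
      (by decide +kernel)
  refine ⟨y', m, ρ, μ, γ, hy', htrace, him, hdesc.cube_eq,
    hdesc.mem_multipliers3769 hμ hm hm2 hbound ?_⟩
  rw [him]
  simpa using h13 ρ.re (by rw [← htrace, ← him, trace_def, one_mul])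

end D3769

section SqAddTwoMulSq

theorem exists_sq_of_mul_eq_sq {a b c : ℤ} (ha : 0 ≤ a) (hb : 0 ≤ b) (hab : IsCoprime a b)
    (h : a * b = c ^ 2) : ∃ u v, a = u ^ 2 ∧ b = v ^ 2 ∧ c = u * v := by
  have sq_of_nonneg {r s : ℤ} (hr : 0 ≤ r) (hrs : r = s ^ 2 ∨ r = -s ^ 2) : r = s ^ 2 :=
    hrs.elim id fun h0 ↦ by nlinarith [sq_nonneg s]
  obtain ⟨u, hu⟩ := Int.sq_of_isCoprime hab h
  obtain ⟨v, hv⟩ := Int.sq_of_isCoprime hab.symm ((mul_comm b a).trans h)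
  have hu := sq_of_nonneg ha hu
  have hv := sq_of_nonneg hb hv
  have hc : c ^ 2 = (u * v) ^ 2 := by rw [← h, hu, hv, mul_pow]
  rcases sq_eq_sq_iff_eq_or_eq_neg.mp hc with hc | hc
  · exact ⟨u, v, hu, hv, hc⟩
  · exact ⟨u, -v, hu, by rw [neg_sq, hv], by rw [hc, mul_neg]⟩

theorem exists_eq_of_sq_add_two_mul_sq_eq_sq {a b y : ℤ} (h : a ^ 2 + 2 * b ^ 2 = y ^ 2)
    (hy : Odd y) (hab : IsCoprime a b) :
    ∃ ε u v : ℤ, (ε = 1 ∨ ε = -1) ∧ a = ε * (u ^ 2 - 2 * v ^ 2) ∧ b = ε * (2 * u * v) := by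
  wlog hpos : 0 < y generalizing y
  · refine this (y := -y) (by rw [neg_sq, h]) hy.neg ?_
    have : y ≠ 0 := fun h0 ↦ by simp [h0] at hy
    omega
  have ha : Odd a := by
    have : Odd (a ^ 2 + 2 * b ^ 2) := h ▸ hy.pow
    simpa [Int.odd_add, Int.odd_pow] using this
  wlog h4 : 4 ∣ y - a generalizing a b
  · have h4' : 4 ∣ y - -a := by
      obtain ⟨i, rfl⟩ := hy
      obtain ⟨j, rfl⟩ := ha
      omega
    obtain ⟨ε, u, v, hε, ha', hb'⟩ := this hab.neg_left (by rw [neg_sq, h]) ha.neg h4'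
    exact ⟨-ε, u, -v, by omega, by linear_combination -ha', by linear_combination hb'⟩
  obtain ⟨s, hs⟩ := h4
  obtain ⟨t, ht⟩ : 2 ∣ y + a := even_iff_two_dvd.mp (hy.add_odd ha)
  have hst : 4 * (s * t) = b ^ 2 := by
    have : 2 * (4 * (s * t)) = 2 * b ^ 2 := by
      linear_combination -h - (y + a) * hs - 4 * s * ht
    linarith
  obtain ⟨e, rfl⟩ : 2 ∣ b :=
    Int.prime_two.dvd_of_dvd_pow (n := 2) ⟨2 * (s * t), by linear_combination -hst⟩
  have hst' : s * t = e ^ 2 := by linarith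
  have hcop : IsCoprime s t := by
    refine isCoprime_of_prime_dvd (fun h0 ↦ by omega) fun p hp hps hpt ↦ hp.not_isUnit ?_
    refine hab.isUnit_of_dvd' (x := p) ?_ (dvd_mul_of_dvd_right ?_ 2)
    · rw [show a = t - 2 * s by linarith]
      exact dvd_sub hpt (dvd_mul_of_dvd_right hps 2)
    · exact hp.dvd_of_dvd_pow (n := 2) (hst' ▸ dvd_mul_of_dvd_left hps t)
  obtain ⟨v, u, rfl, rfl, rfl⟩ := exists_sq_of_mul_eq_sq (by nlinarith [sq_nonneg e])
    (by nlinarith [sq_nonneg e]) hcop hst'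
  exact ⟨1, u, v, .inl rfl, by linarith, by ring⟩

end SqAddTwoMulSq

section CoverForm
variable {x w y : ℤ}

/-- The cubic form `C` in the identity `F = C² + 8 B²` for `F = sextic`, `B = x w (x + w)`,
which describes the two-cover of the curve attached to `ℚ(√-2)`. -/
def coverForm (x w : ℤ) : ℤ := x ^ 3 + x ^ 2 * w - 2 * x * w ^ 2 - w ^ 3

theorem coverForm_sq_add_eight_mul_sq (x w : ℤ) :
    coverForm x w ^ 2 + 8 * (x * w * (x + w)) ^ 2 = sextic x w := by
  rw [coverForm, sextic]
  ring

theorem isCoprime_coverForm (h : IsCoprime x w) (hodd : Odd (coverForm x w)) :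
    IsCoprime (coverForm x w) (2 * (x * w * (x + w))) := by
  have hx : IsCoprime (coverForm x w) x := by
    rw [show coverForm x w = -w ^ 3 + x * (x ^ 2 + x * w - 2 * w ^ 2) by rw [coverForm]; ring]
    exact h.symm.pow_left.neg_left.add_mul_left_left _
  have hw : IsCoprime (coverForm x w) w := by
    rw [show coverForm x w = x ^ 3 + w * (x ^ 2 - 2 * x * w - w ^ 2) by rw [coverForm]; ring]
    exact h.pow_left.add_mul_left_left _
  have hxw : IsCoprime (coverForm x w) (x + w) := by
    have hx' : IsCoprime x (x + w) := by simpa using h.mul_add_left_right 1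
    rw [show coverForm x w = -x ^ 3 + (x + w) * (2 * x ^ 2 - x * w - w ^ 2) by
      rw [coverForm]; ring]
    exact hx'.pow_left.neg_left.add_mul_left_left _
  have h2 : IsCoprime (coverForm x w) 2 := Int.isCoprime_two_right.mpr hodd
  exact h2.mul_right ((hx.mul_right hw).mul_right hxw)

instance : Fact (Nat.Prime 3769) := ⟨by norm_num⟩

/-- The zeros of `f₁₈` modulo `3769`. -/
def roots3769 : Finset (ZMod 3769) := {899, 959, 2548}

theorem mem_roots3769 : ∀ r : ZMod 3769, sextic r 1 = 0 → r ∈ roots3769 := by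
  simp only [sextic]
  decide +kernel

theorem IsTwistPoint.exists_mem_roots3769 (h : IsTwistPoint 3769 x w y) :
    (w : ZMod 3769) ≠ 0 ∧ ∃ r ∈ roots3769, (x : ZMod 3769) = r * w := by
  obtain ⟨t, -, hchart, heq⟩ := (h.map (Int.castRingHom (ZMod 3769))).exists_chart
  simp only [eq_intCast] at hchart heq
  rw [show ((3769 : ℤ) : ZMod 3769) = 0 by decide, zero_mul] at heq
  rcases hchart with htw | ⟨htw, htx⟩
  · rw [htw] at heq
    exact ⟨right_ne_zero_of_mul_eq_one htw, _, mem_roots3769 _ heq.symm,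
      by linear_combination -(x : ZMod 3769) * htw⟩
  · simp [htw, htx, sextic] at heq

-- `59C + 48B + (118B - 12C)√-2` is the product of `C + 2B√-2` and `59 - 12√-2`.
theorem IsTwistPoint.dvd_coverForm (h : IsTwistPoint 3769 x w y) :
    3769 ∣ 59 * coverForm x w + 48 * (x * w * (x + w)) ∧
      3769 ∣ 118 * (x * w * (x + w)) - 12 * coverForm x w := by
  obtain ⟨-, r, hr, hx⟩ := h.exists_mem_roots3769
  have key : ∀ r ∈ roots3769, 59 * (r ^ 3 + r ^ 2 - 2 * r - 1) + 48 * (r * (r + 1)) = 0 ∧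
      118 * (r * (r + 1)) - 12 * (r ^ 3 + r ^ 2 - 2 * r - 1) = 0 := by
    decide +kernel
  obtain ⟨h1, h2⟩ := key r hr
  constructor <;> refine (ZMod.intCast_zmod_eq_zero_iff_dvd _ 3769).mp ?_ <;>
    rw [coverForm] <;> push_cast <;> rw [hx]
  · linear_combination (w : ZMod 3769) ^ 3 * h1
  · linear_combination (w : ZMod 3769) ^ 3 * h2

theorem IsTwistPoint.exists_coverForm_eq (h : IsTwistPoint 3769 x w y) :
    ∃ ε u v : ℤ, (ε = 1 ∨ ε = -1) ∧
      coverForm x w = ε * (59 * (u ^ 2 - 2 * v ^ 2) - 24 * (2 * u * v)) ∧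
      2 * (x * w * (x + w)) = ε * (59 * (2 * u * v) + 12 * (u ^ 2 - 2 * v ^ 2)) := by
  obtain ⟨⟨a, ha⟩, b, hb⟩ := h.dvd_coverForm
  have hC : coverForm x w = 59 * a - 24 * b := by linarith
  have hB : 2 * (x * w * (x + w)) = 59 * b + 12 * a := by linarith
  have hodd : Odd (coverForm x w) := by
    have hP : cubicForm x w = coverForm x w + 2 * (x * w * (x + w)) := by
      rw [cubicForm, coverForm]
      ring
    have := h.odd.2.2
    rw [hP] at this
    simpa [Int.odd_add] using this
  have hcop : IsCoprime a b := by
    have := isCoprime_coverForm h.isCoprime hodd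
    rw [hC, hB] at this
    obtain ⟨r, s, hrs⟩ := this
    exact ⟨59 * r + 12 * s, 59 * s - 24 * r, by linear_combination hrs⟩
  have hnorm : a ^ 2 + 2 * b ^ 2 = y ^ 2 := by
    have := (coverForm_sq_add_eight_mul_sq x w).trans h.eq_sextic.symm
    rw [show 8 * (x * w * (x + w)) ^ 2 = 2 * (2 * (x * w * (x + w))) ^ 2 by ring, hC, hB] at this
    linarith
  obtain ⟨ε, u, v, hε, rfl, rfl⟩ := exists_eq_of_sq_add_two_mul_sq_eq_sq hnorm h.odd.1 hcop
  exact ⟨ε, u, v, hε, by rw [hC]; ring, by rw [hB]; ring⟩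

end CoverForm

section LinearForms
variable {N n : ℕ} {c e a w : ℤ}

theorem isCoprime_sq_add_eight_mul_sq (hwa : IsCoprime w a) : IsCoprime w (a ^ 2 + 8 * w ^ 2) := by
  rw [show a ^ 2 + 8 * w ^ 2 = a ^ 2 + w * (8 * w) by ring]
  exact hwa.pow_right.add_mul_left_right _

theorem isCoprime_sub_mul (hN : N.Prime) (hce : c ^ 2 + 8 * e ^ 2 = N) (hwa : IsCoprime w a)
    (h : ¬ (N : ℤ) ∣ c * w - e * a) : IsCoprime (c * w - e * a) (N * (a ^ 2 + 8 * w ^ 2)) := by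
  have hLN : IsCoprime (c * w - e * a) N :=
    ((Nat.prime_iff_prime_int.mp hN).coprime_iff_not_dvd.mpr h).symm
  refine hLN.mul_right (isCoprime_of_prime_dvd (fun h0 ↦ h (h0.1 ▸ dvd_zero _))
    fun p hp hpL hpn ↦ hp.not_isUnit ?_)
  have hpNw : p ∣ N * w ^ 2 := by
    rw [← hce, show (c ^ 2 + 8 * e ^ 2) * w ^ 2 =
      (c * w - e * a) * (c * w + e * a) + e ^ 2 * (a ^ 2 + 8 * w ^ 2) by ring]
    exact dvd_add (hpL.mul_right _) (hpn.mul_left _)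
  have hpw := (hLN.of_isCoprime_of_dvd_left hpL).dvd_of_dvd_mul_left hpNw
  exact (isCoprime_sq_add_eight_mul_sq hwa).isUnit_of_dvd' (hp.dvd_of_dvd_pow hpw) hpn

theorem mod_eight_of_eq_sq_add_eight_mul_sq (hn : (n : ℤ) = a ^ 2 + 8 * w ^ 2) (ha : Odd a) :
    n % 8 = 1 := by
  have := Int.eight_dvd_sq_sub_one_of_odd ha
  omega

theorem jacobiSym_sub_mul_eq (hN : N.Prime) (hN8 : N % 8 = 1) (hce : c ^ 2 + 8 * e ^ 2 = N)
    (hn : (n : ℤ) = a ^ 2 + 8 * w ^ 2) (ha : Odd a) (hwa : IsCoprime w a)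
    (h : ¬ (N : ℤ) ∣ c * w - e * a) :
    jacobiSym (c * w - e * a) N = jacobiSym (c * w - e * a) n := by
  have hn8 := mod_eight_of_eq_sq_add_eight_mul_sq hn ha
  have hcop := isCoprime_sub_mul hN hce hwa h
  have : NeZero N := ⟨hN.ne_zero⟩
  have : NeZero n := ⟨by omega⟩
  refine Int.eq_of_mul_eq_one ?_
  rw [← jacobiSym.mul_right]
  refine jacobiSym_eq_one_of_forall_odd_prime (by rw [Nat.mul_mod, hN8, hn8])
    (fun h0 ↦ h (h0 ▸ dvd_zero _)) fun q hq _ hqL ↦ ?_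
  -- `(c² + 8e²)(a² + 8w²) = (ca + 8ew)² + 8(cw - ea)²`
  have hNn : ((N * n : ℕ) : ℤ) =
      (c * a + 8 * e * w) ^ 2 + (c * w - e * a) * (8 * (c * w - e * a)) := by
    rw [Nat.cast_mul, ← hce, hn]
    ring
  refine jacobiSym_eq_one_of_dvd_sub_sq hq (y := 1) (z := c * a + 8 * e * w) ?_ fun hz ↦ ?_
  · rw [hNn]
    exact (hqL.mul_right (8 * (c * w - e * a))).trans (dvd_of_eq (by ring))
  · refine (Nat.prime_iff_prime_int.mp hq).not_isUnit (hcop.isUnit_of_dvd' hqL ?_)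
    rw [← hn, ← Nat.cast_mul, hNn]
    exact dvd_add (hz.pow two_ne_zero) (hqL.mul_right _)

end LinearForms

section QuadraticSymbols

instance : Fact (Nat.Prime 89) := ⟨by norm_num⟩

variable {x w y : ℤ}

theorem IsTwistPoint.jacobiSym_right_eq_one {d : ℕ} (h : IsTwistPoint (d : ℤ) x w y)
    (hd : d % 8 = 1) (hw : w ≠ 0) : jacobiSym w d = 1 := by
  refine jacobiSym_eq_one_of_forall_odd_prime hd hw fun q hq _ hqw ↦
    jacobiSym_eq_one_of_dvd_sub_sq hq (y := y) (z := x ^ 3) ?_ fun hx ↦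
      have hqp := Nat.prime_iff_prime_int.mp hq
      h.not_dvd_right_of_dvd_left hqp (hqp.dvd_of_dvd_pow hx) hqw
  refine hqw.trans ⟨2 * x ^ 5 + 5 * x ^ 4 * w + 10 * x ^ 3 * w ^ 2 + 10 * x ^ 2 * w ^ 3 +
    4 * x * w ^ 4 + w ^ 5, ?_⟩
  rw [h.eq_sextic, sextic]
  ring

theorem jacobiSym_eq_one_of_eq_sq_add_eight_mul_sq {a : ℤ} {n : ℕ}
    (hn : (n : ℤ) = a ^ 2 + 8 * w ^ 2) (ha : Odd a) (hwa : IsCoprime w a) (hw : w ≠ 0) :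
    jacobiSym w n = 1 := by
  refine jacobiSym_eq_one_of_forall_odd_prime (mod_eight_of_eq_sq_add_eight_mul_sq hn ha) hw
    fun q hq _ hqw ↦ jacobiSym_eq_one_of_dvd_sub_sq hq (y := 1) (z := a) ?_ fun hqa ↦
      (Nat.prime_iff_prime_int.mp hq).not_isUnit (hwa.isUnit_of_dvd' hqw hqa)
  exact hqw.trans ⟨8 * w, by rw [hn]; ring⟩

-- Modulo `n` the fraction `-a / (2w)` is a square root of `-2`. Substituting it in
-- `C + 2B√-2 = ε (59 + 12√-2) (u + v√-2)²` shows that `59w - 6a` times a square is `G` times a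
-- square.
theorem jacobiSym_eq_of_coverForm_eq {a m u v ε G K : ℤ} {n : ℕ}
    (hn : (n : ℤ) = a ^ 2 + 8 * w ^ 2) (ha : Odd a) (hwa : IsCoprime w a) (hw : w ≠ 0)
    (hm : m = 1 ∨ m = 2) (hε : ε = 1 ∨ ε = -1) (hG : IsCoprime G n)
    (hC : coverForm x w = ε * (59 * (u ^ 2 - 2 * v ^ 2) - 24 * (2 * u * v)))
    (hB : 2 * (x * w * (x + w)) = ε * (59 * (2 * u * v) + 12 * (u ^ 2 - 2 * v ^ 2)))
    (hK : m ^ 3 * (coverForm x w - a * (x * (x + w))) = G * w ^ 2 + n * K) :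
    jacobiSym (59 * w - 6 * a) n = jacobiSym G n := by
  have hn8 := mod_eight_of_eq_sq_add_eight_mul_sq hn ha
  have hnodd : Odd n := Nat.odd_iff.mpr (by omega)
  have hwn : IsCoprime w n := hn ▸ isCoprime_sq_add_eight_mul_sq hwa
  have h2n : IsCoprime (2 : ℤ) n := Int.isCoprime_two_left.mpr (by exact_mod_cast hnodd)
  have hz : IsCoprime (2 ^ 2 * G * w ^ 3) (n : ℤ) :=
    (h2n.pow_left.mul_left hG).mul_left hwn.pow_left
  have hw1 := jacobiSym_eq_one_of_eq_sq_add_eight_mul_sq hn ha hwa hw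
  have hm1 : jacobiSym m n = 1 := by
    rcases hm with rfl | rfl
    · exact jacobiSym.one_left n
    · rw [jacobiSym.at_two hnodd, ZMod.χ₈_nat_mod_eight, hn8]
      decide
  have hε1 : jacobiSym ε n = 1 := by
    rcases hε with rfl | rfl
    · exact jacobiSym.one_left n
    · rw [jacobiSym.at_neg_one hnodd, ZMod.χ₄_nat_one_mod_four (by omega)]
  have hsq : 2 * ε * (59 * w - 6 * a) * (2 * w * u - a * v) ^ 2 =
      8 * w ^ 3 * (coverForm x w - a * (x * (x + w))) +
        n * (ε * (2 * (59 * w - 6 * a) * v ^ 2 + 48 * w * u * v)) := by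
    linear_combination -8 * w ^ 3 * hC + 4 * w ^ 2 * a * hB -
      ε * (2 * (59 * w - 6 * a) * v ^ 2 + 48 * w * u * v) * hn
  have hprod : jacobiSym (m * ε * w * ((59 * w - 6 * a) * G)) n = 1 := by
    refine jacobiSym_eq_one_of_forall_prime fun q hq hqn ↦ ?_
    have hqn : (q : ℤ) ∣ n := Int.natCast_dvd_natCast.mpr hqn
    refine jacobiSym_eq_one_of_dvd_sub_sq hq (y := 2 * m * (2 * w * u - a * v)) ?_ fun hqz ↦
      (Nat.prime_iff_prime_int.mp hq).not_isUnit (hz.isUnit_of_dvd' hqz hqn)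
    refine hqn.trans ⟨16 * w ^ 4 * G * K + 2 * m ^ 3 * G * w *
      (ε * (2 * (59 * w - 6 * a) * v ^ 2 + 48 * w * u * v)), ?_⟩
    linear_combination 2 * m ^ 3 * G * w * hsq + 16 * w ^ 4 * G * hK
  simp only [jacobiSym.mul_left, hm1, hε1, hw1, one_mul] at hprod
  exact Int.eq_of_mul_eq_one hprod

theorem IsTwistPoint.right_ne_zero_3769 (h : IsTwistPoint 3769 x w y) : w ≠ 0 :=
  fun h0 ↦ h.exists_mem_roots3769.1 (by rw [h0, Int.cast_zero])

theorem IsTwistPoint.jacobiSym_3769_eq (h : IsTwistPoint 3769 x w y) {m b s : ℤ}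
    (hχ : ∀ r ∈ roots3769, quadraticChar (ZMod 3769) (59 - 6 * (m * r + b)) = s) :
    jacobiSym (59 * w - 6 * (m * x + b * w)) 3769 = s := by
  obtain ⟨-, r, hr, hx⟩ := h.exists_mem_roots3769
  have hw := h.jacobiSym_right_eq_one (d := 3769) (by norm_num) h.right_ne_zero_3769
  rw [jacobiSym_eq_quadraticChar] at hw ⊢
  push_cast
  rw [hx, show 59 * (w : ZMod 3769) - 6 * (m * (r * w) + b * w) = (59 - 6 * (m * r + b)) * w by
    ring, map_mul, hχ r hr, hw, mul_one]

theorem IsTwistPoint.jacobiSym_sub_mul_ne (h : IsTwistPoint 3769 x w y) {m b c e K s : ℤ}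
    (hm : m = 1 ∨ m = 2) (hodd : Odd (m * x + b * w)) (hce : c ^ 2 + 8 * e ^ 2 = 89)
    (hK : m ^ 3 * (coverForm x w - (m * x + b * w) * (x * (x + w))) =
      (c * w - e * (m * x + b * w)) * w ^ 2 + ((m * x + b * w) ^ 2 + 8 * w ^ 2) * K)
    (hs : s ≠ 0) (hχ : ∀ r ∈ roots3769, quadraticChar (ZMod 3769) (59 - 6 * (m * r + b)) = s) :
    jacobiSym (c * w - e * (m * x + b * w)) 89 ≠ -s := by
  intro hG
  have hw := h.right_ne_zero_3769
  have hwa : IsCoprime w (m * x + b * w) := by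
    refine IsCoprime.add_mul_right_right ?_ b
    rcases hm with rfl | rfl
    · rw [one_mul]
      exact h.isCoprime.symm
    · have hw2 : Odd w := (Int.odd_mul.mp ((Int.odd_add'.mp hodd).mpr (even_two_mul x))).2
      exact (Int.isCoprime_two_right.mpr hw2).mul_right h.isCoprime.symm
  have hD := h.jacobiSym_3769_eq hχ
  have h89 := not_dvd_of_jacobiSym_ne_zero (p := 89) (by rw [hG]; exact neg_ne_zero.mpr hs)
  have h3769 := not_dvd_of_jacobiSym_ne_zero (p := 3769) (by rw [hD]; exact hs)
  obtain ⟨ε, u, v, hε, hC, hB⟩ := h.exists_coverForm_eq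
  obtain ⟨n, hn⟩ : ∃ n : ℕ, (n : ℤ) = (m * x + b * w) ^ 2 + 8 * w ^ 2 :=
    ⟨_, Int.toNat_of_nonneg (by positivity)⟩
  have hcop : IsCoprime (c * w - e * (m * x + b * w)) n :=
    hn ▸ (isCoprime_sub_mul (N := 89) (by norm_num) hce hwa h89).of_mul_right_right
  have : s = -s := by
    calc s = jacobiSym (59 * w - 6 * (m * x + b * w)) 3769 := hD.symm
      _ = jacobiSym (59 * w - 6 * (m * x + b * w)) n :=
        jacobiSym_sub_mul_eq (by norm_num) (by norm_num) (by norm_num) hn hodd hwa h3769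
      _ = jacobiSym (c * w - e * (m * x + b * w)) n :=
        jacobiSym_eq_of_coverForm_eq hn hodd hwa hw hm hε hcop hC hB (hn ▸ hK)
      _ = jacobiSym (c * w - e * (m * x + b * w)) 89 :=
        (jacobiSym_sub_mul_eq (by norm_num) (by norm_num) hce hn hodd hwa h89).symm
      _ = -s := hG
  omega

set_option synthInstance.maxSize 2000 in
theorem quadraticChar_lines_of_im_pow_eq_zero_3769 : ∀ X W : ZMod 89, W = 1 ∨ W = 0 ∧ X = 1 →
    ∀ Y, 3769 * Y ^ 2 = sextic X W → ∀ μ ∈ multipliers3769,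
      ∀ B, 2 * B + 3 * Y = realCubicForm X W →
        ((⟨B, 3 * Y⟩ * star ⟨μ.1, μ.2⟩ : QuadOrder ((942 : ℤ) : ZMod 89)) ^ 30).im = 0 →
          ∀ s ∈ ({1, -1} : Finset ℤ),
            quadraticChar (ZMod 89) (8 * W - X) = -s ∨ quadraticChar (ZMod 89) (9 * X + W) = -s ∨
            quadraticChar (ZMod 89) (X - 10 * W) = -s ∨
            quadraticChar (ZMod 89) (2 * X + 10 * W) = s ∨
            quadraticChar (ZMod 89) (10 * X + 8 * W) = s := by
  simp only [sextic, realCubicForm]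
  decide +kernel

theorem quadraticChar_roots3769 : ∀ r ∈ roots3769,
    quadraticChar (ZMod 3769) (59 - 6 * (r + 1)) = 1 ∧
      quadraticChar (ZMod 3769) (59 - 6 * (r - 1)) = 1 ∧
      quadraticChar (ZMod 3769) (59 - 6 * (2 * r + 1)) = -1 := by
  simp only [roots3769, Finset.mem_insert, Finset.mem_singleton]
  rintro r (rfl | rfl | rfl) <;> decide +kernel

theorem IsTwistPoint.jacobiSym_eight_mul_sub_ne (h : IsTwistPoint 3769 x w y)
    (hodd : Odd (x + w)) : jacobiSym (8 * w - x) 89 ≠ -1 := by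
  have := h.jacobiSym_sub_mul_ne (m := 1) (b := 1) (c := 9) (e := 1) (K := -w) (s := 1)
    (.inl rfl) (by simpa using hodd) (by norm_num) (by rw [coverForm]; ring) (by norm_num)
    fun r hr ↦ by simpa using (quadraticChar_roots3769 r hr).1
  rwa [show 9 * w - 1 * (1 * x + 1 * w) = 8 * w - x by ring] at this

theorem IsTwistPoint.jacobiSym_sub_ten_mul_ne (h : IsTwistPoint 3769 x w y)
    (hodd : Odd (x - w)) : jacobiSym (x - 10 * w) 89 ≠ -1 := by
  have := h.jacobiSym_sub_mul_ne (m := 1) (b := -1) (c := -9) (e := -1) (K := w) (s := 1)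
    (.inl rfl) (by simpa [← sub_eq_add_neg] using hodd) (by norm_num) (by rw [coverForm]; ring)
    (by norm_num) fun r hr ↦ by
      simpa [← sub_eq_add_neg] using (quadraticChar_roots3769 r hr).2.1
  rwa [show -9 * w - -1 * (1 * x + -1 * w) = x - 10 * w by ring] at this

theorem IsTwistPoint.jacobiSym_two_mul_add_ten_mul_ne (h : IsTwistPoint 3769 x w y)
    (hodd : Odd w) : jacobiSym (2 * x + 10 * w) 89 ≠ 1 := by
  have := h.jacobiSym_sub_mul_ne (m := 2) (b := 1) (c := 9) (e := -1) (K := -2 * x - 2 * w)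
    (s := -1) (.inr rfl) (by simpa using (even_two_mul x).add_odd hodd) (by norm_num)
    (by rw [coverForm]; ring) (by norm_num) fun r hr ↦ by
      simpa using (quadraticChar_roots3769 r hr).2.2
  rwa [show 9 * w - -1 * (2 * x + 1 * w) = 2 * x + 10 * w by ring, neg_neg] at this

theorem IsTwistPoint.exists_sign_quadraticChar_lines (h : IsTwistPoint 3769 x w y) :
    ∃ t : ZMod 89, ∃ s : ℤ, s ≠ 0 ∧
      (∀ L : ℤ, quadraticChar (ZMod 89) (t * L) = s * jacobiSym L 89) ∧
      (quadraticChar (ZMod 89) (8 * (t * w) - t * x) = -s ∨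
        quadraticChar (ZMod 89) (9 * (t * x) + t * w) = -s ∨
        quadraticChar (ZMod 89) (t * x - 10 * (t * w)) = -s ∨
        quadraticChar (ZMod 89) (2 * (t * x) + 10 * (t * w)) = s ∨
        quadraticChar (ZMod 89) (10 * (t * x) + 8 * (t * w)) = s) := by
  obtain ⟨y', m, ρ, μ, γ, hy', htrace, him, hcube, hμ, hm⟩ := h.exists_real_cube_eq_3769
  obtain ⟨t, ht, hchart, heq⟩ := (hy'.map (Int.castRingHom (ZMod 89))).exists_chart
  simp only [eq_intCast] at hchart heq
  have htr : 2 * (t ^ 3 * ρ.re) + 3 * (t ^ 3 * y') = realCubicForm (t * x : ZMod 89) (t * w) := by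
    have := congrArg (Int.castRingHom (ZMod 89)) htrace
    rw [map_realCubicForm, eq_intCast, eq_intCast, eq_intCast, trace_def, him] at this
    rw [realCubicForm_mul_mul, ← this]
    push_cast
    ring
  have hres := im_smul_mul_star_pow_eq_zero (p := 89) (e := 30) (by decide +kernel) (by norm_num)
    hm hcube (t ^ 3)
  refine ⟨t, quadraticChar (ZMod 89) t, quadraticChar_eq_zero_iff.not.mpr ht, fun L ↦ ?_, ?_⟩
  · rw [map_mul, jacobiSym_eq_quadraticChar]
  refine quadraticChar_lines_of_im_pow_eq_zero_3769 _ _ hchart _ heq _ hμ _ htr ?_ _ ?_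
  · rw [him] at hres
    simpa [QuadraticAlgebra.ext_iff, mul_left_comm] using hres
  · simpa using quadraticChar_dichotomy ht

theorem IsTwistPoint.odd_3769 (h : IsTwistPoint 3769 x w y) : Odd x := by
  by_contra hx
  rw [Int.not_odd_iff_even] at hx
  have hw : Odd w := Int.not_even_iff_odd.mp fun hw ↦
    h.not_dvd_right_of_dvd_left Int.prime_two hx.two_dvd hw.two_dvd
  have hrot : IsTwistPoint 3769 (-(x + w)) x y := by simpa using h.rotate.rotate
  have h₁ := h.jacobiSym_eight_mul_sub_ne (hx.add_odd hw)
  have h₂ := hrot.jacobiSym_eight_mul_sub_ne (by simpa using hw)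
  have h₃ := h.jacobiSym_sub_ten_mul_ne (hx.sub_odd hw)
  have h₄ := h.jacobiSym_two_mul_add_ten_mul_ne hw
  have h₅ := h.rotate.jacobiSym_two_mul_add_ten_mul_ne (hx.add_odd hw)
  obtain ⟨t, s, hs, hchar, hlines⟩ := h.exists_sign_quadraticChar_lines
  have hne (L : ℤ) (hL : jacobiSym L 89 ≠ -1) : quadraticChar (ZMod 89) (t * L) ≠ -s := fun h ↦
    hL (mul_left_cancel₀ hs (by rw [← hchar, h, mul_neg_one]))
  have hne' (L : ℤ) (hL : jacobiSym L 89 ≠ 1) : quadraticChar (ZMod 89) (t * L) ≠ s := fun h ↦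
    hL (mul_left_cancel₀ hs (by rw [← hchar, h, mul_one]))
  rcases hlines with hl | hl | hl | hl | hl
  · exact hne _ h₁ (by rw [← hl]; push_cast; ring_nf)
  · exact hne _ h₂ (by rw [← hl]; push_cast; ring_nf)
  · exact hne _ h₃ (by rw [← hl]; push_cast; ring_nf)
  · exact hne' _ h₄ (by rw [← hl]; push_cast; ring_nf)
  · exact hne' _ h₅ (by rw [← hl]; push_cast; ring_nf)

theorem not_isTwistPoint_3769 : ¬ IsTwistPoint 3769 x w y := fun h ↦
  Int.not_even_iff_odd.mpr h.rotate.rotate.odd_3769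
    (by simpa [add_comm] using h.rotate.odd_3769.add_odd h.odd_3769.neg)

end QuadraticSymbols

end TwistedX118

/-- For every `d` in `{681, 1329, 1761, 2913, 3769, 5281, 6217, 7057, 7321}`, the
twisted modular curve `d·y² = f₁₈(x)` has no rational points. -/
theorem no_rational_point_on_twist_X1_18 (d : ℤ)
    (hd : d ∈ ({681, 1329, 1761, 2913, 3769, 5281, 6217, 7057, 7321} : Set ℤ)) :
    ¬ ∃ x y : ℚ, (d : ℚ) * y ^ 2 =
      x ^ 6 + 2 * x ^ 5 + 5 * x ^ 4 + 10 * x ^ 3 + 10 * x ^ 2 + 4 * x + 1 := by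
  rintro ⟨x, y, h⟩
  have hsq : Squarefree d := by
    rw [← Int.squarefree_natAbs]
    rcases hd with rfl | rfl | rfl | rfl | rfl | rfl | rfl | rfl | rfl <;>
      rw [Nat.squarefree_iff_minSqFac] <;> decide +kernel
  obtain ⟨y', hy'⟩ := TwistedX118.IsTwistPoint.exists_of_rat hsq
    (show (d : ℚ) * y ^ 2 = TwistedX118.sextic x 1 by
      rw [h, TwistedX118.sextic]
      ring)
  rcases hd with rfl | rfl | rfl | rfl | rfl | rfl | rfl | rfl | rfl
  · exact TwistedX118.not_isTwistPoint_681 hy'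
  · exact TwistedX118.not_isTwistPoint_1329 hy'
  · exact TwistedX118.not_isTwistPoint_1761 hy'
  · exact TwistedX118.not_isTwistPoint_2913 hy'
  · exact TwistedX118.not_isTwistPoint_3769 hy'
  · exact TwistedX118.not_isTwistPoint_5281 hy'
  · exact TwistedX118.not_isTwistPoint_6217 hy'
  · exact TwistedX118.not_isTwistPoint_7057 hy'
  · exact TwistedX118.not_isTwistPoint_7321 hy'
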